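/- There exist a continuous function 𝓔 : [0,∞) → ℝ and a constant C > 0 with |𝓔(x)| ≤ C·x for all x ∈ [0,1], such that for all primes a, q ≥ 2 with a ≠ q one has M(a,q) − M(−q,a) = (q/a)^{1/2}·(log(q/a) + γ − log(8π)) + ζ(1/2)²·(1 − 2·(q^{1/2}/φ(q))·(1 − q^{−1/2}) + 2·(a^{1/2}/φ(a))·(1 − a^{−1/2})) + 𝓔(a/q). -/

import Mathlib

open Complex Real Finset

open scoped Classical in
/-- `M(a,q)`: the twisted second moment of Dirichlet `L`-functions at the central point,
summed over the primitive (= nontrivial, for prime `q`) characters mod `q`. -/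
noncomputable def Mtw (a : ℤ) (q : ℕ) [NeZero q] : ℂ :=
  (Real.sqrt q / (Nat.totient q : ℝ)) *
    ∑ χ : DirichletCharacter ℂ q, if χ = 1 then 0 else
      (‖χ.LFunction (1/2)‖^2 : ℂ) * χ (a : ZMod q)

/-!
By orthogonality of characters, for prime `q` the moment `M(a,q)` is, up to the contribution of the
trivial character, the value at `s = 1/2` of `q⁻ˢ ∑ ζ(s, r/q) ζ(s, ar/q)`, the sum being over the
residues `r` modulo `q`. For `1 < Re s` this is the sum of `(x (k + 1) - l)⁻ˢ (k + 1)⁻ˢ` over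
`0 ≤ k` and `l < x (k + 1)`, where `x = a/q`. Sum it instead over `k` first. The column `l = 0`
gives `x⁻ˢ ζ(2s)`. Up to Beta integrals and Euler–Maclaurin remainders, the columns `l = n + 1` add
up to the moment for `(-q, a)` and the columns `l = -(n + 1)` to `ζ(s)²`.

The remainders are holomorphic for `0 < Re s < 2`, depend only on `(n + 1)/x`, and sum to a
continuous function of `x` which is `O(x^{3/2})` at `s = 1/2`. Hence the identity continues to
`s = 1/2`. The Beta integrals sum to a multiple of `ζ(2s - 1)` by a Gamma factor, whose pole at
`s = 1/2` cancels that of `x⁻ˢ ζ(2s)`, leaving the logarithm and Euler's constant.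
-/

namespace ConreyYoung

open MeasureTheory Filter Topology
open scoped ComplexConjugate

section EulerMaclaurin

/-- The periodic kernel `{u}(1 - {u})/2` which represents the error of the trapezoidal rule. -/
noncomputable def trapezoidKernel (u : ℝ) : ℝ := Int.fract u * (1 - Int.fract u) / 2

lemma trapezoidKernel_nonneg (u : ℝ) : 0 ≤ trapezoidKernel u :=
  div_nonneg (mul_nonneg (Int.fract_nonneg u) (sub_nonneg.2 (Int.fract_lt_one u).le)) two_pos.le

lemma trapezoidKernel_le_one (u : ℝ) : trapezoidKernel u ≤ 1 := by
  unfold trapezoidKernel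
  nlinarith [Int.fract_nonneg u, Int.fract_lt_one u]

lemma continuous_trapezoidKernel : Continuous trapezoidKernel :=
  ContinuousOn.comp_fract'' (f := fun u : ℝ => u * (1 - u) / 2) (by fun_prop) (by simp)

lemma trapezoidKernel_sub_natCast (u : ℝ) (n : ℕ) :
    trapezoidKernel (u - n) = trapezoidKernel u := by
  simp [trapezoidKernel]

lemma trapezoidKernel_of_mem_Icc {u : ℝ} (hu : u ∈ Set.Icc (0 : ℝ) 1) :
    trapezoidKernel u = u * (1 - u) / 2 := by
  rcases hu.2.eq_or_lt with rfl | h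
  · simp [trapezoidKernel]
  · rw [trapezoidKernel, Int.fract_eq_self.2 ⟨hu.1, h⟩]

variable {E : Type*} [NormedAddCommGroup E] [NormedSpace ℝ E]

/-- The constant term `f c / 2 - ∫₀ᶜ f + ∫_c^∞ κ(t - c) f''(t) dt` by which, according to the
Euler–Maclaurin formula, the sum of `f` over `c, c + 1, c + 2, …` differs from the integral of `f`
over `(0, ∞)`. The second derivative `f''` is passed explicitly. -/
noncomputable def eulerMaclaurinDefect (f f'' : ℝ → E) (c : ℝ) : E :=
  (1 / 2 : ℝ) • f c - (∫ t in (0 : ℝ)..c, f t) +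
    ∫ t in Set.Ioi c, trapezoidKernel (t - c) • f'' t

variable [CompleteSpace E] {f f' f'' : ℝ → E} {c : ℝ}

lemma integral_trapezoidKernel_smul_add (hf : ∀ t ∈ Set.Icc c (c + 1), HasDerivAt f (f' t) t)
    (hf' : ∀ t ∈ Set.Icc c (c + 1), HasDerivAt f' (f'' t) t)
    (hf'' : ContinuousOn f'' (Set.Icc c (c + 1))) :
    ∫ t in c..c + 1, (trapezoidKernel (t - c) • f'' t + f t) =
      (1 / 2 : ℝ) • (f c + f (c + 1)) := by
  have hcc : c ≤ c + 1 := by linarith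
  have hkernel (t : ℝ) (ht : t ∈ Set.Icc c (c + 1)) :
      trapezoidKernel (t - c) = (t - c) * (1 - (t - c)) / 2 :=
    trapezoidKernel_of_mem_Icc ⟨by linarith [ht.1], by linarith [ht.2]⟩
  have hprim (t : ℝ) (ht : t ∈ Set.Icc c (c + 1)) : HasDerivAt
      (fun t => ((t - c) * (1 - (t - c)) / 2) • f' t - ((1 - 2 * (t - c)) / 2) • f t)
      (trapezoidKernel (t - c) • f'' t + f t) t := by
    have hid := (hasDerivAt_id t).sub_const c
    have h₁ : HasDerivAt (fun t => (t - c) * (1 - (t - c)) / 2) ((1 - 2 * (t - c)) / 2) t :=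
      ((hid.mul (hid.const_sub 1)).div_const 2).congr_deriv (by simp; ring)
    have h₂ : HasDerivAt (fun t => (1 - 2 * (t - c)) / 2) (-1) t :=
      (((hid.const_mul 2).const_sub 1).div_const 2).congr_deriv (by norm_num)
    refine ((h₁.smul (hf' t ht)).sub (h₂.smul (hf t ht))).congr_deriv ?_
    rw [hkernel t ht]
    module
  have hcont : ContinuousOn (fun t => trapezoidKernel (t - c) • f'' t + f t)
      (Set.Icc c (c + 1)) :=
    ((continuous_trapezoidKernel.comp (continuous_sub_right c)).continuousOn.smul hf'').add
      fun t ht => (hf t ht).continuousAt.continuousWithinAt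
  rw [← Set.uIcc_of_le hcc] at hprim hcont
  rw [intervalIntegral.integral_eq_sub_of_hasDerivAt hprim hcont.intervalIntegrable]
  simp only [add_sub_cancel_left, sub_self]
  module

lemma integral_trapezoidKernel_smul_add_natCast
    (hf : ∀ t ∈ Set.Ici c, HasDerivAt f (f' t) t)
    (hf' : ∀ t ∈ Set.Ici c, HasDerivAt f' (f'' t) t)
    (hf'' : ContinuousOn f'' (Set.Ici c)) (N : ℕ) :
    ∫ t in c..c + N, (trapezoidKernel (t - c) • f'' t + f t) =
      ∑ n ∈ Finset.range N, f (n + c) - (1 / 2 : ℝ) • f c + (1 / 2 : ℝ) • f (N + c) := by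
  have hcont : ContinuousOn (fun t => trapezoidKernel (t - c) • f'' t + f t) (Set.Ici c) :=
    ((continuous_trapezoidKernel.comp (continuous_sub_right c)).continuousOn.smul hf'').add
      fun t ht => (hf t ht).continuousAt.continuousWithinAt
  have hint (a b : ℝ) (ha : c ≤ a) (hb : c ≤ b) : IntervalIntegrable
      (fun t => trapezoidKernel (t - c) • f'' t + f t) volume a b :=
    (hcont.mono fun t ht => (le_min ha hb).trans ht.1).intervalIntegrable
  induction N with
  | zero => simp
  | succ N ih =>
    have hN : (0 : ℝ) ≤ N := N.cast_nonneg
    have hsub : Set.Icc (c + N) (c + N + 1) ⊆ Set.Ici c := fun t ht =>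
      (le_add_of_nonneg_right hN).trans ht.1
    have hlast := integral_trapezoidKernel_smul_add (fun t ht => hf t (hsub ht))
      (fun t ht => hf' t (hsub ht)) (hf''.mono hsub)
    simp only [← sub_sub, trapezoidKernel_sub_natCast] at hlast
    have hadd := intervalIntegral.integral_add_adjacent_intervals
      (hint c (c + N) le_rfl (by linarith)) (hint (c + N) (c + N + 1) (by linarith) (by linarith))
    push_cast
    rw [← add_assoc, ← hadd, ih, hlast, Finset.sum_range_succ, add_comm (N : ℝ) c,
      show (N : ℝ) + 1 + c = c + N + 1 by ring]
    module

lemma hasSum_integral_Ioi_add_eulerMaclaurinDefect (hc : 0 < c)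
    (hf : ∀ t ∈ Set.Ioi (0 : ℝ), HasDerivAt f (f' t) t)
    (hf' : ∀ t ∈ Set.Ioi (0 : ℝ), HasDerivAt f' (f'' t) t)
    (hf'' : ContinuousOn f'' (Set.Ioi 0)) (hfi : IntegrableOn f (Set.Ioi 0))
    (hκ : IntegrableOn (fun t => trapezoidKernel (t - c) • f'' t) (Set.Ioi c))
    (hsum : Summable fun n : ℕ => f (n + c)) :
    HasSum (fun n : ℕ => f (n + c)) ((∫ t in Set.Ioi 0, f t) + eulerMaclaurinDefect f f'' c) := by
  have hpos (t : ℝ) (ht : t ∈ Set.Ici c) : t ∈ Set.Ioi (0 : ℝ) := hc.trans_le ht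
  have hfc : IntegrableOn f (Set.Ioi c) := hfi.mono_set (Set.Ioi_subset_Ioi hc.le)
  have hlim := intervalIntegral_tendsto_integral_Ioi c (hκ.add hfc)
    (tendsto_atTop_add_const_left atTop c tendsto_natCast_atTop_atTop)
  have hlim' : Tendsto (fun N : ℕ => ∑ n ∈ Finset.range N, f (n + c) - (1 / 2 : ℝ) • f c +
      (1 / 2 : ℝ) • f (N + c)) atTop
      (𝓝 (∑' n : ℕ, f (n + c) - (1 / 2 : ℝ) • f c + (1 / 2 : ℝ) • (0 : E))) :=
    (hsum.hasSum.tendsto_sum_nat.sub_const _).add (hsum.tendsto_atTop_zero.const_smul _)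
  have heq := tendsto_nhds_unique (hlim.congr fun N =>
    integral_trapezoidKernel_smul_add_natCast (fun t ht => hf t (hpos t ht))
      (fun t ht => hf' t (hpos t ht)) (hf''.mono hpos) N) hlim'
  simp only [Pi.add_apply] at heq
  rw [integral_add hκ hfc, smul_zero, add_zero] at heq
  convert! hsum.hasSum using 1
  rw [eulerMaclaurinDefect, ← intervalIntegral.integral_interval_add_Ioi hfi hfc,
    eq_add_of_sub_eq heq.symm]
  abel

lemma eulerMaclaurinDefect_eq_add (hc : 0 < c)
    (hf : ∀ t ∈ Set.Ioi (0 : ℝ), HasDerivAt f (f' t) t)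
    (hf' : ∀ t ∈ Set.Ioi (0 : ℝ), HasDerivAt f' (f'' t) t)
    (hf'' : ContinuousOn f'' (Set.Ioi 0)) (hfi : IntervalIntegrable f volume 0 c)
    (hκ : IntegrableOn (fun t => trapezoidKernel (t - c) • f'' t) (Set.Ioi c)) :
    eulerMaclaurinDefect f f'' c = f c + eulerMaclaurinDefect f f'' (c + 1) := by
  have hcc : c ≤ c + 1 := by linarith
  have hpos (t : ℝ) (ht : t ∈ Set.Icc c (c + 1)) : t ∈ Set.Ioi (0 : ℝ) := hc.trans_le ht.1
  have hfcont : ContinuousOn f (Set.uIcc c (c + 1)) := fun t ht =>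
    (hf t (hpos t (Set.uIcc_of_le hcc ▸ ht))).continuousAt.continuousWithinAt
  have hκ' := hκ.mono_set (Set.Ioi_subset_Ioi hcc)
  have hsplit := intervalIntegral.integral_interval_add_Ioi hκ hκ'
  have hκi : IntervalIntegrable (fun t => trapezoidKernel (t - c) • f'' t) volume c (c + 1) :=
    (intervalIntegrable_iff_integrableOn_Ioc_of_le hcc).2 (hκ.mono_set Set.Ioc_subset_Ioi_self)
  have htrap := integral_trapezoidKernel_smul_add (fun t ht => hf t (hpos t ht))
    (fun t ht => hf' t (hpos t ht)) (hf''.mono hpos)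
  rw [intervalIntegral.integral_add hκi hfcont.intervalIntegrable] at htrap
  have hshift (t : ℝ) : trapezoidKernel (t - (c + 1)) = trapezoidKernel (t - c) := by
    simpa [sub_sub] using trapezoidKernel_sub_natCast (t - c) 1
  simp only [eulerMaclaurinDefect, hshift]
  rw [← hsplit, ← intervalIntegral.integral_add_adjacent_intervals hfi hfcont.intervalIntegrable,
    eq_sub_of_add_eq htrap]
  module

end EulerMaclaurin

section Summand

/-- The function `t ↦ t⁻ˢ ((t + y)⁻ˢ - y⁻ˢ)` whose sums over translates of `ℕ` produce the error
term of the reciprocity law. -/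
noncomputable def summand (s : ℂ) (y t : ℝ) : ℂ :=
  (t : ℂ) ^ (-s) * (((t + y : ℝ) : ℂ) ^ (-s) - (y : ℂ) ^ (-s))

/-- The derivative of `summand s y`. -/
noncomputable def summandDeriv (s : ℂ) (y t : ℝ) : ℂ :=
  -s * (t : ℂ) ^ (-s - 1) * (((t + y : ℝ) : ℂ) ^ (-s) - (y : ℂ) ^ (-s)) +
    (t : ℂ) ^ (-s) * (-s * ((t + y : ℝ) : ℂ) ^ (-s - 1))

/-- The second derivative of `summand s y`. -/
noncomputable def summandDeriv₂ (s : ℂ) (y t : ℝ) : ℂ :=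
  -s * ((-s - 1) * (t : ℂ) ^ (-s - 2)) * (((t + y : ℝ) : ℂ) ^ (-s) - (y : ℂ) ^ (-s)) +
    2 * (-s * (t : ℂ) ^ (-s - 1) * (-s * ((t + y : ℝ) : ℂ) ^ (-s - 1))) +
    (t : ℂ) ^ (-s) * (-s * ((-s - 1) * ((t + y : ℝ) : ℂ) ^ (-s - 2)))

lemma hasDerivAt_ofReal_cpow (r : ℂ) {t : ℝ} (ht : 0 < t) :
    HasDerivAt (fun t : ℝ => (t : ℂ) ^ r) (r * (t : ℂ) ^ (r - 1)) t := by
  simpa using ((hasDerivAt_id (t : ℂ)).cpow_const (c := r) (Or.inl ht)).comp_ofReal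

lemma continuousOn_ofReal_cpow {X : Type*} [TopologicalSpace X] {g : X → ℝ} {S : Set X} (r : ℂ)
    (hg : ContinuousOn g S) (hpos : ∀ x ∈ S, 0 < g x) :
    ContinuousOn (fun x => (g x : ℂ) ^ r) S :=
  (Complex.continuous_ofReal.comp_continuousOn hg).cpow_const fun x hx => Or.inl (hpos x hx)

variable {s : ℂ} {y t : ℝ}

lemma hasDerivAt_summand (hy : 0 < y) (ht : 0 < t) :
    HasDerivAt (summand s y) (summandDeriv s y t) t :=
  (hasDerivAt_ofReal_cpow (-s) ht).mul
    (((hasDerivAt_ofReal_cpow (-s) (add_pos ht hy)).comp_add_const t y).sub_const _)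

lemma hasDerivAt_summandDeriv (hy : 0 < y) (ht : 0 < t) :
    HasDerivAt (summandDeriv s y) (summandDeriv₂ s y t) t := by
  have hpow (r : ℂ) := hasDerivAt_ofReal_cpow r ht
  have hshift (r : ℂ) := (hasDerivAt_ofReal_cpow r (add_pos ht hy)).comp_add_const t y
  refine ((((hpow (-s - 1)).const_mul (-s)).mul ((hshift (-s)).sub_const ((y : ℂ) ^ (-s)))).add
    ((hpow (-s)).mul ((hshift (-s - 1)).const_mul (-s)))).congr_deriv ?_
  rw [summandDeriv₂, show -s - 1 - 1 = -s - 2 by ring]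
  ring

lemma continuousOn_uncurry_summandDeriv₂ (s : ℂ) :
    ContinuousOn (fun p : ℝ × ℝ => summandDeriv₂ s p.1 p.2) (Set.Ioi 0 ×ˢ Set.Ioi 0) := by
  have hy (r : ℂ) : ContinuousOn (fun p : ℝ × ℝ => (p.1 : ℂ) ^ r) (Set.Ioi 0 ×ˢ Set.Ioi 0) :=
    continuousOn_ofReal_cpow r continuousOn_fst fun p hp => hp.1
  have ht (r : ℂ) : ContinuousOn (fun p : ℝ × ℝ => (p.2 : ℂ) ^ r) (Set.Ioi 0 ×ˢ Set.Ioi 0) :=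
    continuousOn_ofReal_cpow r continuousOn_snd fun p hp => hp.2
  have hty (r : ℂ) : ContinuousOn (fun p : ℝ × ℝ => ((p.2 + p.1 : ℝ) : ℂ) ^ r)
      (Set.Ioi 0 ×ˢ Set.Ioi 0) :=
    continuousOn_ofReal_cpow r (by fun_prop) fun p hp => add_pos hp.2 hp.1
  unfold summandDeriv₂
  fun_prop

lemma continuousOn_summand (hy : 0 < y) : ContinuousOn (summand s y) (Set.Ioi 0) :=
  fun _ ht => (hasDerivAt_summand hy ht).continuousAt.continuousWithinAt

lemma continuousOn_summandDeriv₂ (hy : 0 < y) : ContinuousOn (summandDeriv₂ s y) (Set.Ioi 0) :=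
  (continuousOn_uncurry_summandDeriv₂ s).comp (f := fun t => (y, t)) (by fun_prop)
    fun _ ht => ⟨hy, ht⟩

lemma differentiable_summand (hy : 0 < y) (ht : 0 < t) :
    Differentiable ℂ fun s => summand s y t := by
  unfold summand
  fun_prop (disch := exact Or.inl (Complex.ofReal_ne_zero.2 (by positivity)))

lemma differentiable_summandDeriv₂ (hy : 0 < y) (ht : 0 < t) :
    Differentiable ℂ fun s => summandDeriv₂ s y t := by
  unfold summandDeriv₂
  fun_prop (disch := exact Or.inl (Complex.ofReal_ne_zero.2 (by positivity)))

lemma norm_ofReal_add_cpow_sub_le (hs : 0 < s.re) (hy : 0 < y) (ht : 0 ≤ t) :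
    ‖((t + y : ℝ) : ℂ) ^ (-s) - (y : ℂ) ^ (-s)‖ ≤ ‖s‖ * y ^ (-s.re - 1) * t := by
  have hderiv (x : ℝ) (hx : x ∈ Set.Ici y) :
      ‖-s * (x : ℂ) ^ (-s - 1)‖ ≤ ‖s‖ * y ^ (-s.re - 1) := by
    rw [norm_mul, norm_neg, Complex.norm_cpow_eq_rpow_re_of_pos (hy.trans_le hx)]
    gcongr ‖s‖ * ?_
    simpa using Real.rpow_le_rpow_of_nonpos hy hx (by linarith)
  simpa [abs_of_nonneg ht] using (convex_Ici y).norm_image_sub_le_of_norm_hasDerivWithin_le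
    (fun x hx => (hasDerivAt_ofReal_cpow (-s) (hy.trans_le hx)).hasDerivWithinAt) hderiv
    Set.self_mem_Ici (by simpa : t + y ∈ Set.Ici y)

lemma norm_summand_le (hs : 0 < s.re) (hy : 0 < y) (ht : 0 < t) :
    ‖summand s y t‖ ≤ ‖s‖ * y ^ (-s.re - 1) * t ^ (1 - s.re) := by
  rw [summand, norm_mul, Complex.norm_cpow_eq_rpow_re_of_pos ht, Complex.neg_re]
  calc t ^ (-s.re) * ‖((t + y : ℝ) : ℂ) ^ (-s) - (y : ℂ) ^ (-s)‖
      ≤ t ^ (-s.re) * (‖s‖ * y ^ (-s.re - 1) * t) := by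
        gcongr
        exact norm_ofReal_add_cpow_sub_le hs hy ht.le
    _ = ‖s‖ * y ^ (-s.re - 1) * t ^ (1 - s.re) := by
        rw [show 1 - s.re = -s.re + 1 by ring, Real.rpow_add_one ht.ne']
        ring

lemma norm_summand_le_two_mul (hs : 0 < s.re) (hy : 0 < y) (ht : 0 < t) :
    ‖summand s y t‖ ≤ 2 * y ^ (-s.re) * t ^ (-s.re) := by
  have hty : (t + y) ^ (-s.re) ≤ y ^ (-s.re) :=
    Real.rpow_le_rpow_of_nonpos hy (by linarith) (by linarith)
  have hdiff : ‖((t + y : ℝ) : ℂ) ^ (-s) - (y : ℂ) ^ (-s)‖ ≤ 2 * y ^ (-s.re) := by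
    refine (norm_sub_le _ _).trans ?_
    rw [Complex.norm_cpow_eq_rpow_re_of_pos (add_pos ht hy),
      Complex.norm_cpow_eq_rpow_re_of_pos hy, Complex.neg_re]
    linarith
  rw [summand, norm_mul, Complex.norm_cpow_eq_rpow_re_of_pos ht, Complex.neg_re, mul_comm]
  gcongr

lemma norm_summandDeriv₂_le (hs : 0 < s.re) (hy : 0 < y) (ht : 0 < t) :
    ‖summandDeriv₂ s y t‖ ≤
      2 * ‖s‖ * (‖s‖ + 1) ^ 2 * (y ^ (-s.re - 1) * t ^ (-s.re - 1)) := by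
  have hty : 0 < t + y := add_pos ht hy
  have hs₁ : ‖-s - 1‖ ≤ ‖s‖ + 1 := by simpa using norm_sub_le (-s) 1
  have hpow {x : ℝ} (hx : 0 < x) (k : ℝ) : ‖(x : ℂ) ^ (-s - k)‖ = x ^ (-s.re - k) := by
    simp [Complex.norm_cpow_eq_rpow_re_of_pos hx]
  have hpow₀ {x : ℝ} (hx : 0 < x) : ‖(x : ℂ) ^ (-s)‖ = x ^ (-s.re) := by simpa using hpow hx 0
  have hpow₁ {x : ℝ} (hx : 0 < x) : ‖(x : ℂ) ^ (-s - 1)‖ = x ^ (-s.re - 1) := by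
    exact_mod_cast hpow hx 1
  have hpow₂ {x : ℝ} (hx : 0 < x) : ‖(x : ℂ) ^ (-s - 2)‖ = x ^ (-s.re - 1) * x⁻¹ := by
    rw [← Real.rpow_neg_one, ← Real.rpow_add hx]
    convert! hpow hx 2 using 2; ring
  have hmono : (t + y) ^ (-s.re - 1) ≤ y ^ (-s.re - 1) :=
    Real.rpow_le_rpow_of_nonpos hy (by linarith) (by linarith)
  have ht₀ : t ^ (-s.re) = t ^ (-s.re - 1) * t := by
    rw [← Real.rpow_add_one ht.ne', sub_add_cancel]
  have hinv : (t + y)⁻¹ ≤ t⁻¹ := inv_anti₀ ht (by linarith)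
  calc ‖summandDeriv₂ s y t‖
      ≤ ‖s‖ * ((‖s‖ + 1) * (t ^ (-s.re - 1) * t⁻¹)) * (‖s‖ * y ^ (-s.re - 1) * t) +
        2 * (‖s‖ * t ^ (-s.re - 1) * (‖s‖ * y ^ (-s.re - 1))) +
        t ^ (-s.re - 1) * t * (‖s‖ * ((‖s‖ + 1) * (y ^ (-s.re - 1) * t⁻¹))) := by
        refine norm_add₃_le.trans ?_
        simp only [norm_mul, norm_neg, Complex.norm_ofNat, hpow₀ ht, hpow₁ ht, hpow₁ hty,
          hpow₂ ht, hpow₂ hty, ht₀]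
        gcongr
        exact norm_ofReal_add_cpow_sub_le hs hy ht.le
    _ = (‖s‖ * (‖s‖ ^ 2 + 4 * ‖s‖ + 1)) * (y ^ (-s.re - 1) * t ^ (-s.re - 1)) := by
        field_simp
        ring
    _ ≤ 2 * ‖s‖ * (‖s‖ + 1) ^ 2 * (y ^ (-s.re - 1) * t ^ (-s.re - 1)) := by
        refine mul_le_mul_of_nonneg_right ?_ (by positivity)
        nlinarith [norm_nonneg s, pow_nonneg (norm_nonneg s) 3]

end Summand

section SummandDefect

variable {s : ℂ} {y c : ℝ}

lemma intervalIntegrable_summand (hs : 0 < s.re) (hs₂ : s.re < 2) (hy : 0 < y) (hc : 0 ≤ c) :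
    IntervalIntegrable (summand s y) volume 0 c := by
  have hbound : IntervalIntegrable (fun t : ℝ => ‖s‖ * y ^ (-s.re - 1) * t ^ (1 - s.re))
      volume 0 c :=
    (intervalIntegral.intervalIntegrable_rpow' (by linarith)).const_mul _
  rw [intervalIntegrable_iff_integrableOn_Ioc_of_le hc] at hbound ⊢
  refine hbound.mono' (((continuousOn_summand hy).mono fun t ht => ht.1).aestronglyMeasurable
    measurableSet_Ioc) ?_
  filter_upwards [ae_restrict_mem measurableSet_Ioc] with t ht using norm_summand_le hs hy ht.1

lemma integrableOn_summand_Ioi_zero (hs : 1 < s.re) (hs₂ : s.re < 2) (hy : 0 < y) :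
    IntegrableOn (summand s y) (Set.Ioi 0) := by
  have hbound : IntegrableOn (fun t : ℝ => 2 * y ^ (-s.re) * t ^ (-s.re)) (Set.Ioi 1) :=
    (integrableOn_Ioi_rpow_of_lt (by linarith) one_pos).const_mul _
  have htail : IntegrableOn (summand s y) (Set.Ioi 1) := by
    refine hbound.mono' (((continuousOn_summand hy).mono
      (Set.Ioi_subset_Ioi zero_le_one)).aestronglyMeasurable measurableSet_Ioi) ?_
    filter_upwards [ae_restrict_mem measurableSet_Ioi] with t ht
    exact norm_summand_le_two_mul (by linarith) hy (zero_lt_one.trans ht)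
  have hhead : IntegrableOn (summand s y) (Set.Ioc 0 1) :=
    (intervalIntegrable_iff_integrableOn_Ioc_of_le zero_le_one).1
      (intervalIntegrable_summand (by linarith) hs₂ hy zero_le_one)
  rw [← Set.Ioc_union_Ioi_eq_Ioi zero_le_one]
  exact hhead.union htail

lemma norm_trapezoidKernel_smul_summandDeriv₂_le (hs : 0 < s.re) (hy : 0 < y) (u : ℝ) {t : ℝ}
    (ht : 0 < t) :
    ‖trapezoidKernel u • summandDeriv₂ s y t‖ ≤
      2 * ‖s‖ * (‖s‖ + 1) ^ 2 * y ^ (-s.re - 1) * t ^ (-s.re - 1) := by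
  rw [norm_smul, Real.norm_of_nonneg (trapezoidKernel_nonneg u), mul_assoc (2 * ‖s‖ * _)]
  exact (mul_le_of_le_one_left (norm_nonneg _) (trapezoidKernel_le_one u)).trans
    (norm_summandDeriv₂_le hs hy ht)

lemma aestronglyMeasurable_trapezoidKernel_smul_summandDeriv₂ (hy : 0 < y) (hc : 0 < c) :
    AEStronglyMeasurable (fun t => trapezoidKernel (t - c) • summandDeriv₂ s y t)
      (volume.restrict (Set.Ioi c)) :=
  ((continuous_trapezoidKernel.comp (continuous_sub_right c)).continuousOn.smul
    ((continuousOn_summandDeriv₂ hy).mono (Set.Ioi_subset_Ioi hc.le))).aestronglyMeasurable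
    measurableSet_Ioi

lemma integrableOn_trapezoidKernel_smul_summandDeriv₂ (hs : 0 < s.re) (hy : 0 < y) (hc : 0 < c) :
    IntegrableOn (fun t => trapezoidKernel (t - c) • summandDeriv₂ s y t) (Set.Ioi c) := by
  refine ((integrableOn_Ioi_rpow_of_lt (show -s.re - 1 < -1 by linarith) hc).const_mul
    (2 * ‖s‖ * (‖s‖ + 1) ^ 2 * y ^ (-s.re - 1))).mono'
    (aestronglyMeasurable_trapezoidKernel_smul_summandDeriv₂ hy hc) ?_
  filter_upwards [ae_restrict_mem measurableSet_Ioi] with t ht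
  exact norm_trapezoidKernel_smul_summandDeriv₂_le hs hy _ (hc.trans ht)

/-- The defect of the Euler–Maclaurin formula for `summand s y` summed over `c, c + 1, …`. Unlike
the sum itself it makes sense for all `0 < Re s < 2`, which is how the sum gets continued. -/
noncomputable def summandDefect (s : ℂ) (y c : ℝ) : ℂ :=
  eulerMaclaurinDefect (summand s y) (summandDeriv₂ s y) c

lemma summandDefect_eq_add (hs : 0 < s.re) (hs₂ : s.re < 2) (hy : 0 < y) (hc : 0 < c) :
    summandDefect s y c = summand s y c + summandDefect s y (c + 1) :=
  eulerMaclaurinDefect_eq_add hc (fun _ ht => hasDerivAt_summand hy ht)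
    (fun _ ht => hasDerivAt_summandDeriv hy ht) (continuousOn_summandDeriv₂ hy)
    (intervalIntegrable_summand hs hs₂ hy hc.le)
    (integrableOn_trapezoidKernel_smul_summandDeriv₂ hs hy hc)

lemma summable_summand (hs : 1 < s.re) (hy : 0 < y) (hc : 0 < c) :
    Summable fun n : ℕ => summand s y (n + c) := by
  refine (((Real.summable_one_div_nat_add_rpow c s.re).2 hs).mul_left
    (2 * y ^ (-s.re))).of_norm_bounded fun n => ?_
  have hnc : 0 < n + c := by positivity
  simpa [abs_of_pos hnc, Real.rpow_neg hnc.le] using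
    norm_summand_le_two_mul (s := s) (by linarith) hy hnc

lemma hasSum_summand (hs : 1 < s.re) (hs₂ : s.re < 2) (hy : 0 < y) (hc : 0 < c) :
    HasSum (fun n : ℕ => summand s y (n + c))
      ((∫ t in Set.Ioi 0, summand s y t) + summandDefect s y c) :=
  hasSum_integral_Ioi_add_eulerMaclaurinDefect hc (fun _ ht => hasDerivAt_summand hy ht)
    (fun _ ht => hasDerivAt_summandDeriv hy ht) (continuousOn_summandDeriv₂ hy)
    (integrableOn_summand_Ioi_zero hs hs₂ hy)
    (integrableOn_trapezoidKernel_smul_summandDeriv₂ (by linarith) hy hc)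
    (summable_summand hs hy hc)

lemma norm_integral_summand_le (hs : 0 < s.re) (hs₂ : s.re < 2) (hy : 0 < y) (hc : 0 ≤ c) :
    ‖∫ t in (0 : ℝ)..c, summand s y t‖ ≤
      ‖s‖ * y ^ (-s.re - 1) * (c ^ (2 - s.re) / (2 - s.re)) := by
  refine (intervalIntegral.norm_integral_le_of_norm_le hc
    (Eventually.of_forall fun t ht => norm_summand_le hs hy ht.1)
    ((intervalIntegral.intervalIntegrable_rpow' (by linarith)).const_mul _)).trans_eq ?_
  rw [intervalIntegral.integral_const_mul, integral_rpow (Or.inl (by linarith)),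
    show 1 - s.re + 1 = 2 - s.re by ring, Real.zero_rpow (by linarith), sub_zero]

lemma norm_integral_trapezoidKernel_smul_summandDeriv₂_le (hs : 0 < s.re) (hy : 0 < y)
    (hc : 0 < c) :
    ‖∫ t in Set.Ioi c, trapezoidKernel (t - c) • summandDeriv₂ s y t‖ ≤
      2 * ‖s‖ * (‖s‖ + 1) ^ 2 * y ^ (-s.re - 1) * (c ^ (-s.re) / s.re) := by
  have hbound := (integrableOn_Ioi_rpow_of_lt (show -s.re - 1 < -1 by linarith) hc).const_mul
    (2 * ‖s‖ * (‖s‖ + 1) ^ 2 * y ^ (-s.re - 1))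
  refine (norm_integral_le_of_norm_le hbound ?_).trans_eq ?_
  · filter_upwards [ae_restrict_mem measurableSet_Ioi] with t ht
    exact norm_trapezoidKernel_smul_summandDeriv₂_le hs hy _ (hc.trans ht)
  · rw [integral_const_mul, integral_Ioi_rpow_of_lt (by linarith) hc, sub_add_cancel,
      neg_div_neg_eq]

lemma norm_summandDefect_le (hs : 0 < s.re) (hs₂ : s.re < 2) (hy : 0 < y) (hc : 0 < c)
    (hc₂ : c ≤ 2) :
    ‖summandDefect s y c‖ ≤
      (‖s‖ * (1 + 4 / (2 - s.re)) + 2 * ‖s‖ * (‖s‖ + 1) ^ 2 / s.re) * c ^ (-s.re) *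
        y ^ (-s.re - 1) := by
  have := sub_pos.2 hs₂
  have hpow₁ : c ^ (1 - s.re) ≤ 2 * c ^ (-s.re) := by
    rw [sub_eq_add_neg, Real.rpow_add hc, Real.rpow_one]
    gcongr
  have hpow₂ : c ^ (2 - s.re) ≤ 4 * c ^ (-s.re) := by
    rw [sub_eq_add_neg, Real.rpow_add hc, Real.rpow_two]
    gcongr
    nlinarith
  have hvalue : ‖(1 / 2 : ℝ) • summand s y c‖ ≤
      1 / 2 * (‖s‖ * y ^ (-s.re - 1) * c ^ (1 - s.re)) := by
    rw [norm_smul, Real.norm_of_nonneg (by norm_num)]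
    gcongr
    exact norm_summand_le hs hy hc
  calc ‖summandDefect s y c‖
      ≤ ‖(1 / 2 : ℝ) • summand s y c‖ + ‖∫ t in (0 : ℝ)..c, summand s y t‖ +
        ‖∫ t in Set.Ioi c, trapezoidKernel (t - c) • summandDeriv₂ s y t‖ :=
        (norm_add_le _ _).trans (add_le_add_left (norm_sub_le _ _) _)
    _ ≤ 1 / 2 * (‖s‖ * y ^ (-s.re - 1) * (2 * c ^ (-s.re))) +
        ‖s‖ * y ^ (-s.re - 1) * (4 * c ^ (-s.re) / (2 - s.re)) +
        2 * ‖s‖ * (‖s‖ + 1) ^ 2 * y ^ (-s.re - 1) * (c ^ (-s.re) / s.re) := by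
        gcongr ?_ + ?_ + ?_
        · exact hvalue.trans (by gcongr)
        · exact (norm_integral_summand_le hs hs₂ hy hc.le).trans (by gcongr)
        · exact norm_integral_trapezoidKernel_smul_summandDeriv₂_le hs hy hc
    _ = _ := by ring

end SummandDefect

section ParametricIntegral

variable {α : Type*} [MeasurableSpace α] {μ : Measure α} {F : ℂ → α → ℂ} {U : Set ℂ}
  {bound : α → ℝ}

lemma aestronglyMeasurable_deriv_of_differentiableOn (hU : IsOpen U)
    (hmeas : ∀ s ∈ U, AEStronglyMeasurable (F s) μ)
    (hdiff : ∀ᵐ t ∂μ, DifferentiableOn ℂ (fun s => F s t) U) {s₀ : ℂ} (hs₀ : s₀ ∈ U) :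
    AEStronglyMeasurable (fun t => deriv (fun s => F s t) s₀) μ := by
  obtain ⟨r, hr, hball⟩ := Metric.isOpen_iff.1 hU s₀ hs₀
  obtain ⟨h, -, hh_mem, hh⟩ := exists_seq_strictAnti_tendsto' hr
  have hpoint (n : ℕ) : s₀ + (h n : ℂ) ∈ U := hball <| by
    simpa [abs_of_pos (hh_mem n).1] using (hh_mem n).2
  have hh_ne : Tendsto (fun n => (h n : ℂ)) atTop (𝓝[≠] 0) :=
    tendsto_nhdsWithin_iff.2 ⟨(Complex.continuous_ofReal.tendsto 0).comp hh,
      Eventually.of_forall fun n => Complex.ofReal_ne_zero.2 (hh_mem n).1.ne'⟩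
  refine aestronglyMeasurable_of_tendsto_ae atTop
    (f := fun n => (h n : ℂ)⁻¹ • (F (s₀ + h n) - F s₀))
    (fun n => ((hmeas _ (hpoint n)).sub (hmeas s₀ hs₀)).const_smul _) ?_
  filter_upwards [hdiff] with t ht
  exact ((ht.differentiableAt (hU.mem_nhds hs₀)).hasDerivAt.tendsto_slope_zero).comp hh_ne

lemma differentiableOn_integral_of_dominated (hU : IsOpen U)
    (hmeas : ∀ s ∈ U, AEStronglyMeasurable (F s) μ)
    (hdiff : ∀ᵐ t ∂μ, DifferentiableOn ℂ (fun s => F s t) U)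
    (hbound : ∀ᵐ t ∂μ, ∀ s ∈ U, ‖F s t‖ ≤ bound t) (hint : Integrable bound μ) :
    DifferentiableOn ℂ (fun s => ∫ t, F s t ∂μ) U := by
  intro s₀ hs₀
  obtain ⟨r, hr, hball⟩ := Metric.isOpen_iff.1 hU s₀ hs₀
  have hclosed {s : ℂ} (hs : s ∈ Metric.ball s₀ (r / 2)) : Metric.closedBall s (r / 4) ⊆ U :=
    (Metric.closedBall_subset_ball' (by linarith [Metric.mem_ball.1 hs])).trans hball
  refine (hasDerivAt_integral_of_dominated_loc_of_deriv_le
    (F' := fun s t => deriv (fun s => F s t) s) (bound := fun t => bound t / (r / 4))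
    (Metric.ball_mem_nhds s₀ (half_pos hr)) ?_ ?_ ?_ ?_ (hint.div_const _)
    ?_).2.differentiableAt.differentiableWithinAt
  · filter_upwards [hU.mem_nhds hs₀] with s hs using hmeas s hs
  · exact hint.mono' (hmeas s₀ hs₀) (hbound.mono fun t ht => ht s₀ hs₀)
  · exact aestronglyMeasurable_deriv_of_differentiableOn hU hmeas hdiff hs₀
  · filter_upwards [hdiff, hbound] with t ht hbt s hs
    exact Complex.norm_deriv_le_of_forall_mem_sphere_norm_le (by linarith)
      (ht.diffContOnCl_ball (hclosed hs))
      fun z hz => hbt z (hclosed hs (Metric.sphere_subset_closedBall hz))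
  · filter_upwards [hdiff] with t ht s hs
    exact (ht.differentiableAt (hU.mem_nhds
      (hclosed hs (Metric.mem_closedBall_self (by linarith))))).hasDerivAt

end ParametricIntegral

section Holomorphy

/-- The part of the strip `α < Re s < β` inside the disc `‖s‖ < R`; these sets carry the uniform
estimates behind holomorphy in `s`. -/
def truncatedStrip (α β R : ℝ) : Set ℂ := {s | α < s.re ∧ s.re < β ∧ ‖s‖ < R}

variable {α β R y c : ℝ}

lemma isOpen_truncatedStrip : IsOpen (truncatedStrip α β R) :=
  (isOpen_lt continuous_const Complex.continuous_re).inter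
    ((isOpen_lt Complex.continuous_re continuous_const).inter
      (isOpen_lt continuous_norm continuous_const))

lemma exists_mem_truncatedStrip {s : ℂ} (hs : 0 < s.re) (hs₂ : s.re < 2) :
    ∃ α β R : ℝ, 0 < α ∧ β < 2 ∧ s ∈ truncatedStrip α β R :=
  ⟨s.re / 2, (s.re + 2) / 2, ‖s‖ + 1, by linarith, by linarith, by linarith, by linarith,
    by linarith⟩

lemma rpow_le_rpow_add_rpow {x p q r : ℝ} (hx : 0 < x) (hpq : p ≤ q) (hqr : q ≤ r) :
    x ^ q ≤ x ^ p + x ^ r := by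
  rcases le_total x 1 with h | h
  · exact (Real.rpow_le_rpow_of_exponent_ge hx h hpq).trans
      (le_add_of_nonneg_right (Real.rpow_nonneg hx.le r))
  · exact (Real.rpow_le_rpow_of_exponent_le h hqr).trans
      (le_add_of_nonneg_left (Real.rpow_nonneg hx.le p))

lemma differentiableOn_integral_summand (hα : 0 < α) (hβ : β < 2) (hy : 0 < y) (hc : 0 ≤ c) :
    DifferentiableOn ℂ (fun s => ∫ t in (0 : ℝ)..c, summand s y t) (truncatedStrip α β R) := by
  simp only [intervalIntegral.integral_of_le hc]
  have hint (p : ℝ) (hp : p < 2) : IntegrableOn (fun t : ℝ => t ^ (1 - p)) (Set.Ioc 0 c) :=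
    (intervalIntegrable_iff_integrableOn_Ioc_of_le hc).1
      (intervalIntegral.intervalIntegrable_rpow' (by linarith))
  rcases (truncatedStrip α β R).eq_empty_or_nonempty with hempty | ⟨z, hz⟩
  · exact hempty ▸ differentiableOn_empty
  refine differentiableOn_integral_of_dominated isOpen_truncatedStrip
    (bound := fun t => R * (y ^ (-β - 1) + y ^ (-α - 1)) * (t ^ (1 - β) + t ^ (1 - α)))
    (fun s _ => ((continuousOn_summand hy).mono fun t ht => ht.1).aestronglyMeasurable
      measurableSet_Ioc) ?_ ?_
    (((hint β hβ).add (hint α (by linarith [hz.1, hz.2.1]))).const_mul _)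
  · filter_upwards [ae_restrict_mem measurableSet_Ioc] with t ht
    exact (differentiable_summand hy ht.1).differentiableOn
  · filter_upwards [ae_restrict_mem measurableSet_Ioc] with t ht s ⟨hsα, hsβ, hsR⟩
    have ht₀ : 0 < t := ht.1
    have : 0 ≤ R := (norm_nonneg s).trans hsR.le
    refine (norm_summand_le (hα.trans hsα) hy ht₀).trans ?_
    gcongr
    · exact rpow_le_rpow_add_rpow hy (by linarith) (by linarith)
    · exact rpow_le_rpow_add_rpow ht₀ (by linarith) (by linarith)

lemma differentiableOn_integral_trapezoidKernel_smul_summandDeriv₂ (hα : 0 < α) (hy : 0 < y)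
    (hc : 0 < c) :
    DifferentiableOn ℂ
      (fun s => ∫ t in Set.Ioi c, trapezoidKernel (t - c) • summandDeriv₂ s y t)
      (truncatedStrip α β R) := by
  have hint (p : ℝ) (hp : 0 < p) : IntegrableOn (fun t : ℝ => t ^ (-p - 1)) (Set.Ioi c) :=
    integrableOn_Ioi_rpow_of_lt (by linarith) hc
  rcases (truncatedStrip α β R).eq_empty_or_nonempty with hempty | ⟨z, hz⟩
  · exact hempty ▸ differentiableOn_empty
  refine differentiableOn_integral_of_dominated isOpen_truncatedStrip
    (bound := fun t => 2 * R * (R + 1) ^ 2 * (y ^ (-β - 1) + y ^ (-α - 1)) *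
      (t ^ (-β - 1) + t ^ (-α - 1)))
    (fun s _ => aestronglyMeasurable_trapezoidKernel_smul_summandDeriv₂ hy hc) ?_ ?_
    (((hint β (by linarith [hz.1, hz.2.1])).add (hint α hα)).const_mul _)
  · filter_upwards [ae_restrict_mem measurableSet_Ioi] with t ht
    exact ((differentiable_summandDeriv₂ hy (hc.trans ht)).const_smul
      (trapezoidKernel (t - c))).differentiableOn
  · filter_upwards [ae_restrict_mem measurableSet_Ioi] with t ht s ⟨hsα, hsβ, hsR⟩
    have ht₀ : 0 < t := hc.trans ht
    have : 0 ≤ R := (norm_nonneg s).trans hsR.le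
    refine (norm_trapezoidKernel_smul_summandDeriv₂_le (hα.trans hsα) hy _ ht₀).trans ?_
    gcongr
    · exact rpow_le_rpow_add_rpow hy (by linarith) (by linarith)
    · exact rpow_le_rpow_add_rpow ht₀ (by linarith) (by linarith)

lemma differentiableOn_summandDefect (hα : 0 < α) (hβ : β < 2) (hy : 0 < y) (hc : 0 < c) :
    DifferentiableOn ℂ (fun s => summandDefect s y c) (truncatedStrip α β R) :=
  (((differentiable_summand hy hc).const_smul _).differentiableOn.sub
    (differentiableOn_integral_summand hα hβ hy hc.le)).add
    (differentiableOn_integral_trapezoidKernel_smul_summandDeriv₂ hα hy hc)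

lemma norm_summandDefect_le_of_mem_truncatedStrip {δ : ℝ} {s : ℂ} (hα : 0 < α) (hβ : β < 2)
    (hs : s ∈ truncatedStrip α β R) (hy : 0 < y) (hδ : 0 < δ) (hδ₁ : δ ≤ 1) (hδc : δ ≤ c)
    (hc : c ≤ 2) :
    ‖summandDefect s y c‖ ≤
      (R * (1 + 4 / (2 - β)) + 2 * R * (R + 1) ^ 2 / α) * δ ^ (-2 : ℝ) * y ^ (-s.re - 1) := by
  obtain ⟨hsα, hsβ, hsR⟩ := hs
  have := sub_pos.2 hβ
  have := sub_pos.2 (hsβ.trans hβ)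
  have := hδ.trans_le hδc
  have : 0 ≤ R := (norm_nonneg s).trans hsR.le
  have hpow : c ^ (-s.re) ≤ δ ^ (-2 : ℝ) :=
    (Real.rpow_le_rpow_of_nonpos hδ hδc (by linarith)).trans
      (Real.rpow_le_rpow_of_exponent_ge hδ hδ₁ (by linarith))
  refine (norm_summandDefect_le (hα.trans hsα) (hsβ.trans hβ) hy (hδ.trans_le hδc) hc).trans ?_
  gcongr

end Holomorphy

section JointContinuity

variable {s : ℂ} {y c : ℝ}

lemma summand_zero (hs : 0 < s.re) (y : ℝ) : summand s y 0 = 0 := by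
  have hs₀ : s ≠ 0 := by rintro rfl; simp at hs
  simp [summand, Complex.zero_cpow (neg_ne_zero.2 hs₀)]

lemma continuousOn_uncurry_summand (hs : 0 < s.re) (hs₁ : s.re < 1) :
    ContinuousOn (fun p : ℝ × ℝ => summand s p.1 p.2) (Set.Ioi 0 ×ˢ Set.Ici 0) := by
  rintro ⟨y, t⟩ ⟨hy : 0 < y, ht : 0 ≤ t⟩
  rcases ht.eq_or_lt with rfl | ht
  · have hbound : Tendsto (fun p : ℝ × ℝ => ‖s‖ * p.1 ^ (-s.re - 1) * p.2 ^ (1 - s.re))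
        (𝓝[Set.Ioi 0 ×ˢ Set.Ici 0] (y, 0)) (𝓝 0) := by
      have hcont : ContinuousAt (fun p : ℝ × ℝ => ‖s‖ * p.1 ^ (-s.re - 1) * p.2 ^ (1 - s.re))
          (y, 0) :=
        (continuousAt_const.mul (continuousAt_fst.rpow_const (Or.inl hy.ne'))).mul
          (continuousAt_snd.rpow_const (Or.inr (by linarith)))
      simpa [Real.zero_rpow (show 1 - s.re ≠ 0 by linarith)] using
        hcont.tendsto.mono_left nhdsWithin_le_nhds
    rw [ContinuousWithinAt, summand_zero hs]
    refine squeeze_zero_norm' ?_ hbound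
    filter_upwards [self_mem_nhdsWithin] with p ⟨(hp₁ : 0 < p.1), (hp₂ : 0 ≤ p.2)⟩
    rcases hp₂.eq_or_lt with hp | hp
    · rw [← hp, summand_zero hs, norm_zero]
      positivity
    · exact norm_summand_le hs hp₁ hp
  · have hcont : ContinuousOn (fun p : ℝ × ℝ => summand s p.1 p.2) (Set.Ioi 0 ×ˢ Set.Ioi 0) :=
      (continuousOn_ofReal_cpow _ continuousOn_snd fun p hp => hp.2).mul
        ((continuousOn_ofReal_cpow _ (by fun_prop) fun p hp => add_pos hp.2 hp.1).sub
          (continuousOn_ofReal_cpow _ continuousOn_fst fun p hp => hp.1))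
    exact (hcont.continuousAt (prod_mem_nhds (Ioi_mem_nhds hy)
      (Ioi_mem_nhds ht))).continuousWithinAt

lemma continuousOn_uncurry_integral_summand (hs : 0 < s.re) (hs₁ : s.re < 1) :
    ContinuousOn (fun p : ℝ × ℝ => ∫ t in (0 : ℝ)..p.2, summand s p.1 t)
      (Set.Ioi 0 ×ˢ Set.Ici 0) := by
  have hcont : Continuous (Function.uncurry fun (p : (Set.Ioi (0 : ℝ) ×ˢ Set.Ici (0 : ℝ) : Set _))
      (t : ℝ) => summand s p.1.1 (max t 0)) :=
    (continuousOn_uncurry_summand hs hs₁).comp_continuous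
      (f := fun p : (Set.Ioi (0 : ℝ) ×ˢ Set.Ici (0 : ℝ) : Set _) × ℝ =>
        ((p.1 : ℝ × ℝ).1, max p.2 0)) (by fun_prop) fun p => ⟨p.1.2.1, le_max_right p.2 0⟩
  rw [continuousOn_iff_continuous_domRestrict]
  refine (intervalIntegral.continuous_parametric_intervalIntegral_of_continuous (μ := volume)
    (a₀ := 0) hcont (s := fun p => (p : ℝ × ℝ).2) (by fun_prop)).congr fun p => ?_
  refine intervalIntegral.integral_congr fun t ht => ?_
  rw [Set.uIcc_of_le p.2.2] at ht
  simp only [max_eq_left ht.1]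

lemma integral_Ioi_eq_integral_Ioi_zero_add {E : Type*} [NormedAddCommGroup E] [NormedSpace ℝ E]
    (f : ℝ → E) (c : ℝ) : ∫ t in Set.Ioi c, f t = ∫ u in Set.Ioi 0, f (u + c) := by
  simpa using ((measurePreserving_add_right volume c).setIntegral_preimage_emb
    (measurableEmbedding_addRight c) f (Set.Ioi c)).symm

lemma continuousOn_uncurry_integral_trapezoidKernel_smul_summandDeriv₂ (hs : 0 < s.re) :
    ContinuousOn (fun p : ℝ × ℝ =>
      ∫ t in Set.Ioi p.2, trapezoidKernel (t - p.2) • summandDeriv₂ s p.1 t)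
      (Set.Ioi 0 ×ˢ Set.Ioi 0) := by
  simp only [integral_Ioi_eq_integral_Ioi_zero_add _ (Prod.snd _), add_sub_cancel_right]
  have hlocal {y₀ c₀ : ℝ} (hy₀ : 0 < y₀) (hc₀ : 0 < c₀) : ContinuousOn (fun p : ℝ × ℝ =>
      ∫ u in Set.Ioi 0, trapezoidKernel u • summandDeriv₂ s p.1 (u + p.2))
      (Set.Ioi y₀ ×ˢ Set.Ioi c₀) := by
    have hint : IntegrableOn (fun u => (u + c₀) ^ (-s.re - 1)) (Set.Ioi 0) :=
      integrableOn_add_rpow_Ioi_of_lt (by linarith) (by linarith)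
    refine continuousOn_of_dominated
      (bound := fun u => 2 * ‖s‖ * (‖s‖ + 1) ^ 2 * y₀ ^ (-s.re - 1) * (u + c₀) ^ (-s.re - 1))
      (fun p hp => ?_) (fun p ⟨(hp₁ : y₀ < p.1), (hp₂ : c₀ < p.2)⟩ => ?_) (hint.const_mul _) ?_
    · exact (continuous_trapezoidKernel.continuousOn.smul
        ((continuousOn_summandDeriv₂ (hy₀.trans hp.1)).comp (by fun_prop)
          fun u (hu : 0 < u) => add_pos hu (hc₀.trans hp.2))).aestronglyMeasurable
        measurableSet_Ioi
    · filter_upwards [ae_restrict_mem measurableSet_Ioi] with u (hu : 0 < u)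
      have : 0 < p.2 := hc₀.trans hp₂
      refine (norm_trapezoidKernel_smul_summandDeriv₂_le hs (hy₀.trans hp₁) u
        (by positivity)).trans ?_
      gcongr ?_ * ?_ * ?_
      · exact Real.rpow_le_rpow_of_nonpos hy₀ hp₁.le (by linarith)
      · exact Real.rpow_le_rpow_of_nonpos (by positivity) (by linarith) (by linarith)
    · filter_upwards [ae_restrict_mem measurableSet_Ioi] with u (hu : 0 < u)
      have hmaps : Set.MapsTo (fun p : ℝ × ℝ => (p.1, u + p.2)) (Set.Ioi y₀ ×ˢ Set.Ioi c₀)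
          (Set.Ioi 0 ×ˢ Set.Ioi 0) :=
        fun p hp => ⟨hy₀.trans hp.1, add_pos hu (hc₀.trans hp.2)⟩
      exact ((continuousOn_uncurry_summandDeriv₂ s).comp (by fun_prop) hmaps).const_smul
        (trapezoidKernel u)
  rintro ⟨y, c⟩ ⟨hy : 0 < y, hc : 0 < c⟩
  exact ((hlocal (half_pos hy) (half_pos hc)).continuousAt (prod_mem_nhds
    (Ioi_mem_nhds (half_lt_self hy)) (Ioi_mem_nhds (half_lt_self hc)))).continuousWithinAt

lemma continuousOn_uncurry_summandDefect (hs : 0 < s.re) (hs₁ : s.re < 1) :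
    ContinuousOn (fun p : ℝ × ℝ => summandDefect s p.1 p.2) (Set.Ioi 0 ×ˢ Set.Ioi 0) := by
  have hsub : Set.Ioi (0 : ℝ) ×ˢ Set.Ioi (0 : ℝ) ⊆ Set.Ioi 0 ×ˢ Set.Ici 0 :=
    Set.prod_mono_right Set.Ioi_subset_Ici_self
  exact ((((continuousOn_uncurry_summand hs hs₁).mono hsub).const_smul _).sub
    ((continuousOn_uncurry_integral_summand hs hs₁).mono hsub)).add
    (continuousOn_uncurry_integral_trapezoidKernel_smul_summandDeriv₂ hs)

end JointContinuity

section ErrorSeries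

/-- The gap `1 - {y}` from `y` to the next integer strictly above it: the representative of `-y`
modulo `1` in `(0, 1]`. -/
noncomputable def nextIntGap (y : ℝ) : ℝ := 1 - Int.fract y

lemma nextIntGap_pos (y : ℝ) : 0 < nextIntGap y := sub_pos.2 (Int.fract_lt_one y)

lemma nextIntGap_le_one (y : ℝ) : nextIntGap y ≤ 1 := sub_le_self _ (Int.fract_nonneg y)

lemma nextIntGap_eq (y : ℝ) : nextIntGap y = ⌊y⌋ + 1 - y := by
  rw [nextIntGap, Int.fract]
  ring

lemma coe_nextIntGap (y : ℝ) : (nextIntGap y : UnitAddCircle) = ((-y : ℝ) : UnitAddCircle) := by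
  rw [nextIntGap_eq, show (⌊y⌋ : ℝ) + 1 - y = -y + ((⌊y⌋ + 1 : ℤ) : ℝ) by push_cast; ring]
  simp

lemma one_div_le_nextIntGap (m : ℤ) {q : ℕ} (hq : 0 < q) : 1 / (q : ℝ) ≤ nextIntGap (m / q) := by
  have hq' : (0 : ℝ) < q := Nat.cast_pos.2 hq
  have hmul : nextIntGap (m / q) * q = ((q * (⌊(m : ℝ) / q⌋ + 1) - m : ℤ) : ℝ) := by
    rw [nextIntGap_eq]
    push_cast
    field_simp
  have hpos := mul_pos (nextIntGap_pos (m / q)) hq'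
  rw [div_le_iff₀ hq', hmul]
  rw [hmul] at hpos
  exact_mod_cast Int.add_one_le_of_lt (Int.cast_pos.1 hpos)

/-- The contribution of a pair of opposite columns of the lattice sum to the error term. -/
noncomputable def errorTerm (s : ℂ) (y : ℝ) : ℂ :=
  summandDefect s y 1 + summandDefect s y (nextIntGap y)

/-- The error term of the reciprocity law at `s`, up to the factor `x⁻ˢ`. -/
noncomputable def errorSeries (s : ℂ) (x : ℝ) : ℂ := ∑' n : ℕ, errorTerm s ((n + 1) / x)

variable {s : ℂ} {x : ℝ}

lemma natCast_add_one_div_rpow (hx : 0 ≤ x) (n : ℕ) (r : ℝ) :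
    (((n : ℝ) + 1) / x) ^ (-r - 1) = x ^ (r + 1) * ((n : ℝ) + 1) ^ (-r - 1) := by
  rw [Real.div_rpow (by positivity) hx, show -r - 1 = -(r + 1) by ring, Real.rpow_neg hx,
    div_inv_eq_mul, mul_comm]

lemma summable_natCast_add_one_rpow {r : ℝ} (hr : 0 < r) :
    Summable fun n : ℕ => ((n : ℝ) + 1) ^ (-r - 1) := by
  refine ((Real.summable_one_div_nat_add_rpow 1 (r + 1)).2 (by linarith)).congr fun n => ?_
  have hn : (0 : ℝ) < n + 1 := n.cast_add_one_pos
  rw [abs_of_pos hn, one_div, ← Real.rpow_neg hn.le, neg_add']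

lemma exists_norm_errorTerm_le (hs : 0 < s.re) (hs₁ : s.re < 1) :
    ∃ C > 0, ∀ y > 0, ‖errorTerm s y‖ ≤ C * y ^ (-s.re - 1) := by
  set K := ‖s‖ * (1 + 4 / (2 - s.re)) + 2 * ‖s‖ * (‖s‖ + 1) ^ 2 / s.re
  have : 0 < 2 - s.re := by linarith
  have hs₀ : 0 < ‖s‖ := norm_pos_iff.2 (by rintro rfl; simp at hs)
  have hdefect {y c : ℝ} (hy : 0 < y) (hc : 0 < c) (hc₁ : c ≤ 1) :
      ‖summandDefect s y c‖ ≤ (‖s‖ + K) * y ^ (-s.re - 1) := by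
    have hsummand : ‖summand s y c‖ ≤ ‖s‖ * y ^ (-s.re - 1) * 1 :=
      (norm_summand_le hs hy hc).trans (by
        gcongr
        exact Real.rpow_le_one hc.le hc₁ (by linarith))
    have hnext : ‖summandDefect s y (c + 1)‖ ≤ K * 1 * y ^ (-s.re - 1) :=
      (norm_summandDefect_le hs (by linarith) hy (by linarith) (by linarith)).trans (by
        gcongr
        exact Real.rpow_le_one_of_one_le_of_nonpos (by linarith) (by linarith))
    rw [summandDefect_eq_add hs (by linarith) hy hc]
    refine (norm_add_le_of_le hsummand hnext).trans_eq (by ring)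
  refine ⟨2 * (‖s‖ + K), by positivity, fun y hy => ?_⟩
  refine (norm_add_le_of_le (hdefect hy one_pos le_rfl)
    (hdefect hy (nextIntGap_pos y) (nextIntGap_le_one y))).trans_eq (by ring)

lemma exists_norm_errorSeries_le (hs : 0 < s.re) (hs₁ : s.re < 1) :
    ∃ C > 0, ∀ x > 0, ‖errorSeries s x‖ ≤ C * x ^ (s.re + 1) := by
  obtain ⟨C, hC, hbound⟩ := exists_norm_errorTerm_le hs hs₁
  have hsum := summable_natCast_add_one_rpow hs
  refine ⟨C * ∑' n : ℕ, ((n : ℝ) + 1) ^ (-s.re - 1),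
    mul_pos hC (hsum.tsum_pos (fun n => by positivity) 0 (by positivity)), fun x hx => ?_⟩
  refine (tsum_of_norm_bounded ((hsum.mul_left (C * x ^ (s.re + 1))).hasSum) fun n => ?_).trans_eq
    (by rw [tsum_mul_left]; ring)
  exact (hbound _ (by positivity)).trans_eq
    (by rw [natCast_add_one_div_rpow hx.le, mul_assoc])

/-- At an integer `y` the two one-sided limits of `summandDefect s y (nextIntGap y)` agree because
`summandDefect s y c = summand s y c + summandDefect s y (c + 1)` and `summand s y 0 = 0`. -/
lemma continuousOn_errorTerm (hs : 0 < s.re) (hs₁ : s.re < 1) :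
    ContinuousOn (errorTerm s) (Set.Ioi 0) := by
  let f (y : Set.Ioi (0 : ℝ)) (u : ℝ) : ℂ := summand s y (1 - u) + summandDefect s y (1 - u + 1)
  have hf : ContinuousOn (Function.uncurry f) (Set.univ ×ˢ Set.Icc 0 1) :=
    ((continuousOn_uncurry_summand hs hs₁).comp
      (f := fun p : Set.Ioi (0 : ℝ) × ℝ => ((p.1 : ℝ), 1 - p.2)) (by fun_prop)
      fun p hp => ⟨p.1.2, sub_nonneg.2 hp.2.2⟩).add
    ((continuousOn_uncurry_summandDefect hs hs₁).comp
      (f := fun p : Set.Ioi (0 : ℝ) × ℝ => ((p.1 : ℝ), 1 - p.2 + 1)) (by fun_prop)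
      fun p hp => ⟨p.1.2, add_pos_of_nonneg_of_pos (sub_nonneg.2 hp.2.2) one_pos⟩)
  have hends (y : Set.Ioi (0 : ℝ)) : f y 0 = f y 1 := by
    simp only [f, sub_zero, sub_self, zero_add, summand_zero hs]
    exact (summandDefect_eq_add hs (by linarith) y.2 one_pos).symm
  have hone : ContinuousOn (fun y => summandDefect s y 1) (Set.Ioi 0) :=
    (continuousOn_uncurry_summandDefect hs hs₁).comp (f := fun y : ℝ => (y, 1)) (by fun_prop)
      fun y hy => ⟨hy, Set.mem_Ioi.2 one_pos⟩
  refine hone.add ?_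
  rw [continuousOn_iff_continuous_domRestrict]
  exact (hf.comp_fract continuous_subtype_val hends).congr fun y =>
    (summandDefect_eq_add hs (by linarith) y.2 (nextIntGap_pos y)).symm

lemma continuousOn_errorSeries (hs : 0 < s.re) (hs₁ : s.re < 1) :
    ContinuousOn (errorSeries s) (Set.Ioi 0) := by
  obtain ⟨C, hC, hbound⟩ := exists_norm_errorTerm_le hs hs₁
  have hlocal (M : ℝ) : ContinuousOn (errorSeries s) (Set.Ioo 0 M) := by
    refine continuousOn_tsum
      (u := fun n : ℕ => C * M ^ (s.re + 1) * ((n : ℝ) + 1) ^ (-s.re - 1)) (fun n => ?_)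
      ((summable_natCast_add_one_rpow hs).mul_left _) fun n x ⟨hx, hxM⟩ => ?_
    · exact (continuousOn_errorTerm hs hs₁).comp
        (continuousOn_const.div continuousOn_id fun x hx => hx.1.ne')
        fun x hx => div_pos n.cast_add_one_pos hx.1
    · refine (hbound _ (by positivity)).trans ?_
      rw [natCast_add_one_div_rpow hx.le, ← mul_assoc]
      gcongr
  intro x (hx : 0 < x)
  exact ((hlocal (x + 1)).continuousAt
    (Ioo_mem_nhds hx (lt_add_one x))).continuousWithinAt

lemma differentiableOn_errorTerm {α β R y : ℝ} (hα : 0 < α) (hβ : β < 2) (hy : 0 < y) :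
    DifferentiableOn ℂ (fun s => errorTerm s y) (truncatedStrip α β R) :=
  (differentiableOn_summandDefect hα hβ hy one_pos).add
    (differentiableOn_summandDefect hα hβ hy (nextIntGap_pos y))

lemma exists_norm_errorTerm_le_of_mem_truncatedStrip {α β R δ : ℝ} (hα : 0 < α) (hβ : β < 2)
    (hδ : 0 < δ) :
    ∃ C, ∀ s ∈ truncatedStrip α β R, ∀ y > 0, δ ≤ nextIntGap y →
      ‖errorTerm s y‖ ≤ C * y ^ (-s.re - 1) := by
  refine ⟨2 * ((R * (1 + 4 / (2 - β)) + 2 * R * (R + 1) ^ 2 / α) * δ ^ (-2 : ℝ)),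
    fun s hs y hy hgap => ?_⟩
  have hδ₁ : δ ≤ 1 := hgap.trans (nextIntGap_le_one y)
  exact (norm_add_le_of_le
    (norm_summandDefect_le_of_mem_truncatedStrip hα hβ hs hy hδ hδ₁ hδ₁ one_le_two)
    (norm_summandDefect_le_of_mem_truncatedStrip hα hβ hs hy hδ hδ₁ hgap
      ((nextIntGap_le_one y).trans one_le_two))).trans_eq (by ring)

lemma one_div_le_nextIntGap_div_div {a q : ℕ} (ha : 0 < a) (n : ℕ) :
    1 / (a : ℝ) ≤ nextIntGap ((n + 1) / (a / q : ℝ)) := by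
  simpa [div_div_eq_mul_div] using one_div_le_nextIntGap ((n + 1) * q) ha

lemma differentiableOn_errorSeries {a q : ℕ} (ha : 0 < a) (hq : 0 < q) :
    DifferentiableOn ℂ (fun s => errorSeries s (a / q)) {s | 0 < s.re ∧ s.re < 2} := by
  rintro s₀ ⟨hs₀, hs₀'⟩
  obtain ⟨α, β, R, hα, hβ, hmem⟩ := exists_mem_truncatedStrip hs₀ hs₀'
  obtain ⟨C, hbound⟩ := exists_norm_errorTerm_le_of_mem_truncatedStrip (R := R) hα hβ
    (show 0 < 1 / (a : ℝ) by positivity)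
  set x : ℝ := a / q
  have hx : 0 < x := by positivity
  have hC : 0 ≤ C := nonneg_of_mul_nonneg_left
    ((norm_nonneg _).trans (hbound s₀ hmem (((0 : ℕ) + 1) / x) (by positivity)
      (one_div_le_nextIntGap_div_div ha 0))) (by positivity)
  refine ((Complex.differentiableOn_tsum_of_summable_norm
    (u := fun n : ℕ => C * (x ^ (α + 1) + x ^ (β + 1)) * ((n : ℝ) + 1) ^ (-α - 1))
    ((summable_natCast_add_one_rpow hα).mul_left _)
    (fun n => differentiableOn_errorTerm hα hβ (div_pos n.cast_add_one_pos hx))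
    isOpen_truncatedStrip fun n s hs => ?_).differentiableAt
    (isOpen_truncatedStrip.mem_nhds hmem)).differentiableWithinAt
  refine (hbound s hs _ (by positivity) (one_div_le_nextIntGap_div_div ha n)).trans ?_
  rw [natCast_add_one_div_rpow hx.le, ← mul_assoc]
  obtain ⟨hsα, hsβ, -⟩ := hs
  gcongr ?_ * ?_ * ?_
  · exact rpow_le_rpow_add_rpow hx (by linarith) (by linarith)
  · exact Real.rpow_le_rpow_of_exponent_le (by simp) (by linarith)

end ErrorSeries

section BetaIntegral

lemma image_div_one_sub_Ioo : (fun w : ℝ => w / (1 - w)) '' Set.Ioo 0 1 = Set.Ioi 0 := by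
  ext u
  constructor
  · rintro ⟨w, ⟨hw₀, hw₁⟩, rfl⟩
    exact div_pos hw₀ (sub_pos.2 hw₁)
  · intro (hu : 0 < u)
    have hu₁ : 0 < 1 + u := by positivity
    refine ⟨u / (1 + u), ⟨by positivity, (div_lt_one hu₁).2 (by linarith)⟩, ?_⟩
    simp [one_sub_div hu₁.ne', hu₁.ne']

lemma injOn_div_one_sub_Ioo : Set.InjOn (fun w : ℝ => w / (1 - w)) (Set.Ioo 0 1) := by
  rintro v ⟨-, hv⟩ w ⟨-, hw⟩ (h : v / (1 - v) = w / (1 - w))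
  rw [div_eq_div_iff (sub_pos.2 hv).ne' (sub_pos.2 hw).ne'] at h
  linarith

lemma hasDerivWithinAt_div_one_sub {w : ℝ} (hw : w ∈ Set.Ioo (0 : ℝ) 1) :
    HasDerivWithinAt (fun w : ℝ => w / (1 - w)) (1 / (1 - w) ^ 2) (Set.Ioo 0 1) w :=
  (((hasDerivAt_id w).div ((hasDerivAt_id w).const_sub 1) (sub_pos.2 hw.2).ne').congr_deriv
    (by simp)).hasDerivWithinAt

lemma abs_smul_cpow_mul_cpow_div_one_sub (a b : ℂ) {w : ℝ} (hw : w ∈ Set.Ioo (0 : ℝ) 1) :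
    |1 / (1 - w) ^ 2| •
      (((w / (1 - w) : ℝ) : ℂ) ^ (a - 1) * ((w / (1 - w) + 1 : ℝ) : ℂ) ^ (-a - b)) =
      (w : ℂ) ^ (a - 1) * (1 - (w : ℂ)) ^ (b - 1) := by
  obtain ⟨hw₀, hw₁⟩ := hw
  have hv : 0 < 1 - w := sub_pos.2 hw₁
  have hvne : ((1 - w : ℝ) : ℂ) ≠ 0 := Complex.ofReal_ne_zero.2 hv.ne'
  have hinv (r : ℂ) : (((1 - w)⁻¹ : ℝ) : ℂ) ^ r = ((1 - w : ℝ) : ℂ) ^ (-r) := by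
    rw [Complex.ofReal_inv, Complex.inv_cpow _ _
      (by rw [Complex.arg_ofReal_of_nonneg hv.le]; exact Real.pi_pos.ne), Complex.cpow_neg]
  have hsq : ((1 / (1 - w) ^ 2 : ℝ) : ℂ) = ((1 - w : ℝ) : ℂ) ^ (-2 : ℂ) := by
    rw [Complex.cpow_neg]
    norm_cast
    simp
  rw [show w / (1 - w) + 1 = (1 - w)⁻¹ by field_simp; ring, div_eq_mul_inv w, Complex.ofReal_mul,
    Complex.mul_cpow_ofReal_nonneg hw₀.le (by positivity), hinv, hinv, abs_of_pos (by positivity),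
    Complex.real_smul, hsq, ← Complex.ofReal_one, ← Complex.ofReal_sub, Complex.ofReal_one,
    show b - 1 = -2 + -(a - 1) + -(-a - b) by ring, Complex.cpow_add _ _ hvne,
    Complex.cpow_add _ _ hvne]
  ring

lemma integrableOn_Ioi_cpow_mul_add_one_cpow {a b : ℂ} (ha : 0 < a.re) (hb : 0 < b.re) :
    IntegrableOn (fun u : ℝ => (u : ℂ) ^ (a - 1) * ((u + 1 : ℝ) : ℂ) ^ (-a - b)) (Set.Ioi 0) := by
  have hbeta := Complex.betaIntegral_convergent ha hb
  rw [intervalIntegrable_iff_integrableOn_Ioo_of_le zero_le_one] at hbeta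
  rw [← image_div_one_sub_Ioo, integrableOn_image_iff_integrableOn_abs_deriv_smul
    measurableSet_Ioo (fun w => hasDerivWithinAt_div_one_sub) injOn_div_one_sub_Ioo]
  exact hbeta.congr_fun (fun w hw => (abs_smul_cpow_mul_cpow_div_one_sub a b hw).symm)
    measurableSet_Ioo

lemma integral_Ioi_cpow_mul_add_one_cpow (a b : ℂ) :
    ∫ u in Set.Ioi (0 : ℝ), (u : ℂ) ^ (a - 1) * ((u + 1 : ℝ) : ℂ) ^ (-a - b) =
      Complex.betaIntegral a b := by
  rw [← image_div_one_sub_Ioo, integral_image_eq_integral_abs_deriv_smul measurableSet_Ioo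
    (fun w => hasDerivWithinAt_div_one_sub) injOn_div_one_sub_Ioo,
    setIntegral_congr_fun measurableSet_Ioo fun w => abs_smul_cpow_mul_cpow_div_one_sub a b,
    Complex.betaIntegral, intervalIntegral.integral_of_le zero_le_one,
    integral_Ioc_eq_integral_Ioo]

/-- The value `Γ(1 - s) Γ(2s - 1) / Γ(s)` of the integral of `summand s 1` over `(0, ∞)`. -/
noncomputable def gammaFactor (s : ℂ) : ℂ :=
  Complex.Gamma (1 - s) * Complex.Gamma (2 * s - 1) / Complex.Gamma s

variable {s : ℂ}

lemma hasDerivAt_mul_summand_one (hs : s ≠ 1) {u : ℝ} (hu : 0 < u) :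
    HasDerivAt (fun u : ℝ => u * summand s 1 u / (1 - s))
      (summand s 1 u + -s / (1 - s) * ((u : ℂ) ^ (2 - s - 1) *
        ((u + 1 : ℝ) : ℂ) ^ (-(2 - s) - (2 * s - 1)))) u := by
  have hs' : 1 + -s ≠ 0 := by rwa [← sub_eq_add_neg, sub_ne_zero, ne_comm]
  have hune : (u : ℂ) ≠ 0 := Complex.ofReal_ne_zero.2 hu.ne'
  refine ((Complex.ofRealCLM.hasDerivAt.mul (hasDerivAt_summand one_pos hu)).div_const
    (1 - s)).congr_deriv ?_
  rw [show 2 - s - 1 = 1 + -s by ring, show -(2 - s) - (2 * s - 1) = -s - 1 by ring, summand,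
    summandDeriv, sub_eq_add_neg (1 : ℂ) s, Complex.cpow_add _ _ hune, Complex.cpow_sub _ _ hune,
    Complex.cpow_one]
  simp only [Complex.ofRealCLM_apply, Complex.ofReal_one, one_mul]
  field_simp
  ring

lemma continuousWithinAt_mul_summand_one (hs : 0 < s.re) (hs₂ : s.re < 2) :
    ContinuousWithinAt (fun u : ℝ => u * summand s 1 u / (1 - s)) (Set.Ici 0) 0 := by
  have hbound : Tendsto (fun u : ℝ => ‖s‖ * u ^ (2 - s.re) / ‖1 - s‖) (𝓝[Set.Ici 0] 0) (𝓝 0) := by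
    have hcont : ContinuousAt (fun u : ℝ => ‖s‖ * u ^ (2 - s.re) / ‖1 - s‖) 0 :=
      (continuousAt_const.mul (Real.continuousAt_rpow_const _ _ (Or.inr (by linarith)))).div_const _
    simpa [Real.zero_rpow (show 2 - s.re ≠ 0 by linarith)] using
      hcont.tendsto.mono_left nhdsWithin_le_nhds
  rw [ContinuousWithinAt, Complex.ofReal_zero, zero_mul, zero_div]
  refine squeeze_zero_norm' ?_ hbound
  filter_upwards [self_mem_nhdsWithin] with u (hu : 0 ≤ u)
  rcases hu.eq_or_lt with rfl | hu
  · simp only [Complex.ofReal_zero, zero_mul, zero_div, norm_zero]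
    positivity
  · rw [norm_div, norm_mul, Complex.norm_of_nonneg hu.le, show 2 - s.re = 1 - s.re + 1 by ring,
      Real.rpow_add_one hu.ne', mul_comm u, ← mul_assoc]
    gcongr
    simpa using norm_summand_le hs one_pos hu

lemma tendsto_mul_summand_one_atTop (hs : 1 < s.re) :
    Tendsto (fun u : ℝ => u * summand s 1 u / (1 - s)) atTop (𝓝 0) := by
  have hbound : Tendsto (fun u : ℝ => 2 * u ^ (-(s.re - 1)) / ‖1 - s‖) atTop (𝓝 0) := by
    simpa using ((tendsto_rpow_neg_atTop (sub_pos.2 hs)).const_mul 2).div_const ‖1 - s‖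
  refine squeeze_zero_norm' ?_ hbound
  filter_upwards [eventually_gt_atTop 0] with u hu
  rw [norm_div, norm_mul, Complex.norm_of_nonneg hu.le, show -(s.re - 1) = -s.re + 1 by ring,
    Real.rpow_add_one hu.ne', mul_comm u, ← mul_assoc]
  gcongr
  simpa using norm_summand_le_two_mul (s := s) (by linarith) one_pos hu

lemma integral_summand_one (hs : 1 < s.re) (hs₂ : s.re < 2) :
    ∫ t in Set.Ioi 0, summand s 1 t = gammaFactor s := by
  have hs₁ : s ≠ 1 := by rintro rfl; simp at hs
  have hs₀ : s ≠ 0 := by rintro rfl; norm_num at hs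
  have hint := integrableOn_summand_Ioi_zero hs hs₂ one_pos
  have ha : 0 < (2 - s).re := by simpa using hs₂
  have hb : 0 < (2 * s - 1).re := by simp; linarith
  have hbeta := (integrableOn_Ioi_cpow_mul_add_one_cpow ha hb).const_mul (-s / (1 - s))
  have hparts := integral_Ioi_of_hasDerivAt_of_tendsto
    (continuousWithinAt_mul_summand_one (by linarith) hs₂)
    (fun u hu => hasDerivAt_mul_summand_one hs₁ hu) (hint.add hbeta)
    (tendsto_mul_summand_one_atTop hs)
  rw [Complex.ofReal_zero, zero_mul, zero_div, sub_zero, integral_add hint hbeta,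
    integral_const_mul, integral_Ioi_cpow_mul_add_one_cpow,
    Complex.betaIntegral_eq_Gamma_mul_div _ _ ha hb, show 2 - s = 1 - s + 1 by ring,
    Complex.Gamma_add_one _ (sub_ne_zero.2 hs₁.symm), show 1 - s + 1 + (2 * s - 1) = s + 1 by ring,
    Complex.Gamma_add_one _ hs₀] at hparts
  have hΓ : Complex.Gamma s ≠ 0 := Complex.Gamma_ne_zero_of_re_pos (by linarith)
  have := sub_ne_zero.2 hs₁.symm
  rw [eq_neg_of_add_eq_zero_left hparts, gammaFactor]
  field_simp

lemma summand_mul_mul {y u : ℝ} (hy : 0 < y) (hu : 0 ≤ u) :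
    summand s y (y * u) = (y : ℂ) ^ (-2 * s) * summand s 1 u := by
  rw [summand, summand, show y * u + y = y * (u + 1) by ring, Complex.ofReal_mul,
    Complex.ofReal_mul, Complex.mul_cpow_ofReal_nonneg hy.le hu,
    Complex.mul_cpow_ofReal_nonneg hy.le (by positivity), show -2 * s = -s + -s by ring,
    Complex.cpow_add _ _ (Complex.ofReal_ne_zero.2 hy.ne'), Complex.ofReal_one, Complex.one_cpow]
  ring

lemma integral_summand (hs : 1 < s.re) (hs₂ : s.re < 2) {y : ℝ} (hy : 0 < y) :
    ∫ t in Set.Ioi 0, summand s y t = (y : ℂ) ^ (1 - 2 * s) * gammaFactor s := by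
  have hscale := integral_comp_mul_left_Ioi' (summand s y) 0 hy
  rw [mul_zero] at hscale
  rw [← hscale, setIntegral_congr_fun measurableSet_Ioi fun u (hu : 0 < u) =>
    summand_mul_mul hy hu.le, integral_const_mul, integral_summand_one hs hs₂, Complex.real_smul,
    show 1 - 2 * s = 1 + -2 * s by ring, Complex.cpow_add _ _ (Complex.ofReal_ne_zero.2 hy.ne'),
    Complex.cpow_one, mul_assoc]

end BetaIntegral

section LatticeSum

/-- The additive form `q⁻ˢ ∑ ζ(s, r/q) ζ(s, ar/q)`, over the residues `r` modulo `q`, of the twisted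
second moment. -/
noncomputable def hurwitzMoment (s : ℂ) (a : ℤ) (q : ℕ) [NeZero q] : ℂ :=
  ZMod.LFunction (fun r : ZMod q =>
    HurwitzZeta.hurwitzZeta (ZMod.toAddCircle ((a : ZMod q) * r)) s) s

/-- The double array, over `k` and `l` with `l < x (k + 1)`, whose sum by rows is a Hurwitz moment
modulo the denominator of `x` and whose sum by columns involves one modulo its numerator. -/
noncomputable def latticeTerm (s : ℂ) (x : ℝ) (p : ℕ × ℤ) : ℂ :=
  if (p.2 : ℝ) < x * (p.1 + 1) then
    ((p.1 + 1 : ℝ) : ℂ) ^ (-s) * ((x * (p.1 + 1) - p.2 : ℝ) : ℂ) ^ (-s) else 0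

variable {s : ℂ} {x y θ : ℝ}

lemma unitAddCircle_coe_one : ((1 : ℝ) : UnitAddCircle) = 0 := AddCircle.coe_period 1

lemma hasSum_hurwitzZeta (hs : 1 < s.re) (hθ : 0 < θ) (hθ₁ : θ ≤ 1) :
    HasSum (fun j : ℕ => ((j + θ : ℝ) : ℂ) ^ (-s))
      (HurwitzZeta.hurwitzZeta (θ : UnitAddCircle) s) := by
  simpa only [Complex.ofReal_add, Complex.ofReal_natCast, Complex.cpow_neg, one_div] using
    HurwitzZeta.hasSum_hurwitzZeta_of_one_lt_re (a := θ) ⟨hθ.le, hθ₁⟩ hs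

lemma hasSum_riemannZeta (hs : 1 < s.re) :
    HasSum (fun j : ℕ => ((j + 1 : ℝ) : ℂ) ^ (-s)) (riemannZeta s) := by
  simpa only [unitAddCircle_coe_one, HurwitzZeta.hurwitzZeta_zero] using
    hasSum_hurwitzZeta hs one_pos le_rfl

lemma hasSum_hurwitzMoment (hs : 1 < s.re) (a : ℤ) (q : ℕ) [NeZero q] :
    HasSum (fun n : ℕ => ((n + 1 : ℝ) : ℂ) ^ (-s) *
      HurwitzZeta.hurwitzZeta ((a / q * (n + 1) : ℝ) : UnitAddCircle) s)
      (hurwitzMoment s a q) := by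
  have hsum := (ZMod.LSeriesSummable_of_one_lt_re (fun r : ZMod q =>
    HurwitzZeta.hurwitzZeta (ZMod.toAddCircle ((a : ZMod q) * r)) s) hs).LSeriesHasSum
  rw [LSeriesHasSum, ← ZMod.LFunction_eq_LSeries (fun r : ZMod q =>
    HurwitzZeta.hurwitzZeta (ZMod.toAddCircle ((a : ZMod q) * r)) s) hs,
    ← hasSum_nat_add_iff' 1] at hsum
  simp only [Finset.range_one, Finset.sum_singleton, LSeries.term_zero, sub_zero] at hsum
  refine hsum.congr_fun fun n => ?_
  rw [LSeries.term_of_ne_zero n.succ_ne_zero, Complex.cpow_neg, ← div_eq_inv_mul,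
    show (a : ZMod q) * ((n + 1 : ℕ) : ZMod q) = ((a * (n + 1) : ℤ) : ZMod q) by push_cast; rfl,
    ZMod.toAddCircle_intCast]
  push_cast
  rw [mul_div_right_comm]

lemma latticeTerm_ceil_sub (s : ℂ) (x : ℝ) (k j : ℕ) :
    latticeTerm s x (k, ⌈x * (k + 1)⌉ - 1 - j) =
      ((k + 1 : ℝ) : ℂ) ^ (-s) * ((j + nextIntGap (-(x * (k + 1))) : ℝ) : ℂ) ^ (-s) := by
  have hgap := nextIntGap_pos (-(x * (k + 1)))
  have hdiff : x * (k + 1) - ((⌈x * (k + 1)⌉ - 1 - j : ℤ) : ℝ) =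
      j + nextIntGap (-(x * (k + 1))) := by
    rw [nextIntGap_eq, Int.floor_neg]
    push_cast
    ring
  rw [latticeTerm, if_pos (by rw [← sub_pos, hdiff]; positivity), hdiff]

lemma latticeTerm_eq_zero {k : ℕ} {l : ℤ} (h : ∀ j : ℕ, ⌈x * (k + 1)⌉ - 1 - j ≠ l) :
    latticeTerm s x (k, l) = 0 := by
  refine if_neg fun hl => ?_
  have hl' : l < ⌈x * (k + 1)⌉ := Int.lt_ceil.2 hl
  exact h (⌈x * (k + 1)⌉ - 1 - l).toNat (by omega)

lemma hasSum_latticeTerm_row (hs : 1 < s.re) (x : ℝ) (k : ℕ) :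
    HasSum (fun l : ℤ => latticeTerm s x (k, l)) (((k + 1 : ℝ) : ℂ) ^ (-s) *
      HurwitzZeta.hurwitzZeta ((x * (k + 1) : ℝ) : UnitAddCircle) s) := by
  have hinj : Function.Injective (fun j : ℕ => ⌈x * (k + 1)⌉ - 1 - (j : ℤ)) := fun i j h => by
    simpa using h
  rw [← hinj.hasSum_iff fun l hl => latticeTerm_eq_zero fun j hj => hl ⟨j, hj⟩]
  simpa only [Function.comp_def, latticeTerm_ceil_sub, coe_nextIntGap, neg_neg] using
    (hasSum_hurwitzZeta hs (nextIntGap_pos (-(x * (k + 1)))) (nextIntGap_le_one _)).mul_left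
      (((k + 1 : ℝ) : ℂ) ^ (-s))

lemma norm_latticeTerm_ceil_sub_le (hs : 0 < s.re) (a : ℕ) {q : ℕ} (hq : 0 < q) (k j : ℕ) :
    ‖latticeTerm s (a / q) (k, ⌈(a / q : ℝ) * (k + 1)⌉ - 1 - j)‖ ≤
      (1 / q : ℝ) ^ (-s.re) * (((k : ℝ) + 1) ^ (-s.re) * ((j : ℝ) + 1) ^ (-s.re)) := by
  have hgap : 1 / (q : ℝ) ≤ nextIntGap (-((a / q : ℝ) * (k + 1))) := by
    convert one_div_le_nextIntGap (-(a * (k + 1))) hq using 2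
    push_cast
    ring
  have hq₁ : 1 / (q : ℝ) ≤ 1 := (div_le_one (by positivity)).2 (by exact_mod_cast hq)
  have hgap_pos := nextIntGap_pos (-((a / q : ℝ) * (k + 1)))
  rw [latticeTerm_ceil_sub, norm_mul, Complex.norm_cpow_eq_rpow_re_of_pos (by positivity),
    Complex.norm_cpow_eq_rpow_re_of_pos (by positivity), Complex.neg_re, mul_left_comm,
    ← Real.mul_rpow (x := 1 / (q : ℝ)) (by positivity) (by positivity)]
  gcongr ?_ * ?_
  refine Real.rpow_le_rpow_of_nonpos (by positivity) ?_ (by linarith)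
  have : 1 / (q : ℝ) * j ≤ 1 * j := by gcongr
  linarith

lemma summable_latticeTerm (hs : 1 < s.re) (a : ℕ) {q : ℕ} (hq : 0 < q) :
    Summable (latticeTerm s (a / q)) := by
  have hinj : Function.Injective fun p : ℕ × ℕ =>
      (p.1, ⌈(a / q : ℝ) * (p.1 + 1)⌉ - 1 - (p.2 : ℤ)) := by
    rintro ⟨i, j⟩ ⟨i', j'⟩ h
    obtain ⟨rfl, h⟩ := Prod.mk.inj h
    simpa using h
  rw [← hinj.summable_iff fun p hp => latticeTerm_eq_zero fun j hj => hp ⟨(p.1, j), by simp [hj]⟩]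
  have hsum : Summable fun n : ℕ => ((n : ℝ) + 1) ^ (-s.re) := by
    simpa using summable_natCast_add_one_rpow (r := s.re - 1) (by linarith)
  exact .of_norm_bounded
    ((hsum.mul_of_nonneg hsum (fun n => by positivity) fun n => by positivity).mul_left _)
    fun p => norm_latticeTerm_ceil_sub_le (by linarith) a hq p.1 p.2

lemma hasSum_latticeTerm (hs : 1 < s.re) (a q : ℕ) [NeZero q] :
    HasSum (latticeTerm s (a / q)) (hurwitzMoment s a q) := by
  have hsum := (summable_latticeTerm hs a (NeZero.pos q)).hasSum
  have hrows := hsum.prod_fiberwise fun k => hasSum_latticeTerm_row hs (a / q) k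
  rwa [hrows.unique (by simpa using hasSum_hurwitzMoment hs a q)] at hsum

lemma hasSum_cpow_mul_add_cpow (hs : 1 < s.re) (hs₂ : s.re < 2) (hy : 0 < y) (hθ : 0 < θ)
    (hθ₁ : θ ≤ 1) :
    HasSum (fun j : ℕ => ((j + θ : ℝ) : ℂ) ^ (-s) * ((j + θ + y : ℝ) : ℂ) ^ (-s))
      ((y : ℂ) ^ (-s) * HurwitzZeta.hurwitzZeta (θ : UnitAddCircle) s +
        ((y : ℂ) ^ (1 - 2 * s) * gammaFactor s + summandDefect s y θ)) := by
  rw [← integral_summand hs hs₂ hy]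
  refine (((hasSum_hurwitzZeta hs hθ hθ₁).mul_left ((y : ℂ) ^ (-s))).add
    (hasSum_summand hs hs₂ hy hθ)).congr_fun fun j => ?_
  rw [summand]
  ring

lemma latticeTerm_eq_mul (hx : 0 < x) (k : ℕ) (l : ℤ) :
    latticeTerm s x (k, l) = if (l / x : ℝ) < k + 1 then
      (x : ℂ) ^ (-s) * (((k + 1 : ℝ) : ℂ) ^ (-s) * ((k + 1 - l / x : ℝ) : ℂ) ^ (-s)) else 0 := by
  simp only [latticeTerm, div_lt_iff₀' hx]
  split_ifs with hl
  · have hdiff : x * (k + 1) - l = x * (k + 1 - l / x) := by field_simp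
    have hnonneg : 0 ≤ (k + 1 - l / x : ℝ) := by
      rw [sub_nonneg, div_le_iff₀' hx]
      exact hl.le
    rw [hdiff, Complex.ofReal_mul x, Complex.mul_cpow_ofReal_nonneg hx.le hnonneg, mul_left_comm]
  · rfl

lemma hasSum_latticeTerm_column_zero (hs : 1 < s.re) (hx : 0 < x) :
    HasSum (fun k : ℕ => latticeTerm s x (k, 0)) ((x : ℂ) ^ (-s) * riemannZeta (2 * s)) := by
  refine ((hasSum_riemannZeta (s := 2 * s) (by simp; linarith)).mul_left _).congr_fun fun k => ?_
  have hk : 0 < (k + 1 : ℝ) := k.cast_add_one_pos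
  rw [latticeTerm_eq_mul hx, Int.cast_zero, zero_div, if_pos hk, sub_zero,
    ← Complex.cpow_add _ _ (Complex.ofReal_ne_zero.2 hk.ne'), neg_add_eq_sub, sub_eq_add_neg,
    ← two_mul, mul_neg]

lemma hasSum_latticeTerm_column_of_pos (hs : 1 < s.re) (hs₂ : s.re < 2) (hx : 0 < x)
    (hy : 0 < y) {l : ℤ} (hl : (l / x : ℝ) = y) :
    HasSum (fun k : ℕ => latticeTerm s x (k, l))
      ((x : ℂ) ^ (-s) * ((y : ℂ) ^ (-s) *
        HurwitzZeta.hurwitzZeta ((-y : ℝ) : UnitAddCircle) s +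
        ((y : ℂ) ^ (1 - 2 * s) * gammaFactor s + summandDefect s y (nextIntGap y)))) := by
  simp only [latticeTerm_eq_mul hx, hl]
  rw [← (add_left_injective ⌊y⌋₊).hasSum_iff, ← coe_nextIntGap]
  · refine ((hasSum_cpow_mul_add_cpow hs hs₂ hy (nextIntGap_pos y)
      (nextIntGap_le_one y)).mul_left _).congr_fun fun j => ?_
    have hgap := nextIntGap_pos y
    have hrow : ((j + ⌊y⌋₊ : ℕ) : ℝ) + 1 = j + nextIntGap y + y := by
      rw [nextIntGap_eq, Nat.cast_add, natCast_floor_eq_intCast_floor hy.le]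
      ring
    rw [Function.comp_apply, hrow, add_sub_cancel_right,
      if_pos (by linarith [j.cast_nonneg (α := ℝ)]), mul_comm (((j + _ + y : ℝ) : ℂ) ^ (-s))]
  · refine fun k hk => if_neg fun hlt =>
      hk ⟨k - ⌊y⌋₊, Nat.sub_add_cancel (Nat.lt_succ_iff.1 ?_)⟩
    exact (Nat.floor_lt hy.le).2 (by exact_mod_cast hlt)

lemma hasSum_latticeTerm_column_of_neg (hs : 1 < s.re) (hs₂ : s.re < 2) (hx : 0 < x)
    (hy : 0 < y) {l : ℤ} (hl : (l / x : ℝ) = -y) :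
    HasSum (fun k : ℕ => latticeTerm s x (k, l))
      ((x : ℂ) ^ (-s) * ((y : ℂ) ^ (-s) * riemannZeta s +
        ((y : ℂ) ^ (1 - 2 * s) * gammaFactor s + summandDefect s y 1))) := by
  rw [← HurwitzZeta.hurwitzZeta_zero, ← unitAddCircle_coe_one]
  refine ((hasSum_cpow_mul_add_cpow hs hs₂ hy one_pos le_rfl).mul_left _).congr_fun fun k => ?_
  rw [latticeTerm_eq_mul hx, hl, sub_neg_eq_add, if_pos (by linarith [k.cast_nonneg (α := ℝ)])]

lemma hasSum_latticeTerm_column_add_neg (hs : 1 < s.re) (hs₂ : s.re < 2) (hx : 0 < x) (n : ℕ) :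
    HasSum (fun k : ℕ => latticeTerm s x (k, (n + 1 : ℕ)) + latticeTerm s x (k, -(n + 1 : ℕ)))
      (((n + 1 : ℝ) : ℂ) ^ (-s) *
          HurwitzZeta.hurwitzZeta ((-((n + 1) / x) : ℝ) : UnitAddCircle) s +
        riemannZeta s * ((n + 1 : ℝ) : ℂ) ^ (-s) +
        (x : ℂ) ^ (-s) * (2 * gammaFactor s * (x : ℂ) ^ (2 * s - 1)) *
          ((n + 1 : ℝ) : ℂ) ^ (-(2 * s - 1)) +
        (x : ℂ) ^ (-s) * errorTerm s ((n + 1) / x)) := by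
  have hmul : (n + 1 : ℝ) = x * ((n + 1) / x) := by field_simp
  have hcpow (r : ℂ) : ((n + 1 : ℝ) : ℂ) ^ r = (x : ℂ) ^ r * (((n + 1) / x : ℝ) : ℂ) ^ r := by
    conv_lhs => rw [hmul, Complex.ofReal_mul]
    exact Complex.mul_cpow_ofReal_nonneg hx.le (by positivity) r
  have hinv : (x : ℂ) ^ (2 * s - 1) * (x : ℂ) ^ (-(2 * s - 1)) = 1 := by
    rw [← Complex.cpow_add _ _ (Complex.ofReal_ne_zero.2 hx.ne'), add_neg_cancel,
      Complex.cpow_zero]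
  have hy : 0 < (n + 1) / x := by positivity
  convert (hasSum_latticeTerm_column_of_pos hs hs₂ hx hy (l := (n + 1 : ℕ)) (by push_cast; rfl)).add
    (hasSum_latticeTerm_column_of_neg hs hs₂ hx hy (l := -(n + 1 : ℕ))
      (by push_cast; rw [neg_div])) using 1
  rw [hcpow, hcpow, errorTerm, neg_sub]
  rw [neg_sub] at hinv
  linear_combination 2 * gammaFactor s * (x : ℂ) ^ (-s) *
    (((n + 1) / x : ℝ) : ℂ) ^ (1 - 2 * s) * hinv

lemma hasSum_latticeTerm_columns (hs : 1 < s.re) (a q : ℕ) (ha : 0 < a) [NeZero q] :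
    HasSum (fun n : ℕ => ∑' k : ℕ, (latticeTerm s (a / q) (k, (n + 1 : ℕ)) +
      latticeTerm s (a / q) (k, -(n + 1 : ℕ))))
      (hurwitzMoment s a q - ((a / q : ℝ) : ℂ) ^ (-s) * riemannZeta (2 * s)) := by
  have hx : 0 < (a / q : ℝ) := div_pos (Nat.cast_pos.2 ha) (Nat.cast_pos.2 (NeZero.pos q))
  have hcol (l : ℤ) : Summable fun k : ℕ => latticeTerm s (a / q) (k, l) :=
    (summable_latticeTerm hs a (NeZero.pos q)).comp_injective (Prod.mk_left_injective l)
  have hsum := (((Equiv.prodComm ℤ ℕ).hasSum_iff.2 (hasSum_latticeTerm hs a q)).prod_fiberwise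
    fun l => (hcol l).hasSum).nat_add_neg
  rw [← hasSum_nat_add_iff' 1] at hsum
  simp only [Finset.range_one, Finset.sum_singleton, Nat.cast_zero, neg_zero,
    add_sub_add_right_eq_sub] at hsum
  rw [← (hasSum_latticeTerm_column_zero hs hx).tsum_eq]
  exact hsum.congr_fun fun n => (hcol _).tsum_add (hcol _)

/-- The main term of the reciprocity law, from the column `l = 0` and the beta integrals of the
other columns. At `s = 1/2` the poles of its two summands cancel. -/
noncomputable def mainTerm (s : ℂ) (x : ℝ) : ℂ :=
  riemannZeta (2 * s) + 2 * gammaFactor s * (x : ℂ) ^ (2 * s - 1) * riemannZeta (2 * s - 1)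

lemma hurwitzMoment_sub_hurwitzMoment_neg (hs : 1 < s.re) (hs₂ : s.re < 2) (a q : ℕ) [NeZero a]
    [NeZero q] :
    hurwitzMoment s a q - hurwitzMoment s (-q) a =
      ((a / q : ℝ) : ℂ) ^ (-s) * (mainTerm s (a / q) + errorSeries s (a / q)) +
        riemannZeta s ^ 2 := by
  have ha : (0 : ℝ) < a := Nat.cast_pos.2 (NeZero.pos a)
  have hq : (0 : ℝ) < q := Nat.cast_pos.2 (NeZero.pos q)
  have hx : 0 < (a / q : ℝ) := by positivity
  have hcols := hasSum_latticeTerm_columns hs a q (NeZero.pos a)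
  simp only [(hasSum_latticeTerm_column_add_neg hs hs₂ hx _).tsum_eq] at hcols
  have hmoment := hasSum_hurwitzMoment hs (-(q : ℤ)) a
  have hneg (n : ℕ) : ((-(q : ℤ) : ℤ) : ℝ) / a * (n + 1) = -((n + 1) / (a / q : ℝ)) := by
    push_cast
    field_simp
  simp only [hneg] at hmoment
  have hzeta := (hasSum_riemannZeta hs).mul_left (riemannZeta s)
  have hdual := (hasSum_riemannZeta (s := 2 * s - 1) (by simp; linarith)).mul_left
    (((a / q : ℝ) : ℂ) ^ (-s) * (2 * gammaFactor s * ((a / q : ℝ) : ℂ) ^ (2 * s - 1)))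
  have herror := (((hcols.sub hmoment).sub hzeta).sub hdual).tsum_eq
  simp only [add_sub_cancel_left, add_assoc, tsum_mul_left] at herror
  rw [mainTerm, errorSeries]
  linear_combination -herror

end LatticeSum

section AnalyticContinuation

/-- The part of the strip `0 < Re s < 2` above the real axis. It avoids the poles of both sides of
the reciprocity law and touches both `1 < Re s < 2` and the point `1/2`. -/
def upperHalfStrip : Set ℂ := {s | 0 < s.re ∧ s.re < 2 ∧ 0 < s.im}

lemma isOpen_upperHalfStrip : IsOpen upperHalfStrip :=
  (isOpen_lt continuous_const Complex.continuous_re).inter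
    ((isOpen_lt Complex.continuous_re continuous_const).inter
      (isOpen_lt continuous_const Complex.continuous_im))

lemma convex_upperHalfStrip : Convex ℝ upperHalfStrip :=
  (convex_halfSpace_re_gt 0).inter ((convex_halfSpace_re_lt 2).inter (convex_halfSpace_im_gt 0))

lemma one_half_mem_closure_upperHalfStrip : 1 / 2 ∈ closure upperHalfStrip := by
  have hpath : Continuous fun t : ℝ => 1 / 2 + (t : ℂ) * Complex.I := by fun_prop
  have hmaps : Set.MapsTo (fun t : ℝ => 1 / 2 + (t : ℂ) * Complex.I) (Set.Ioi 0)
      upperHalfStrip := fun t (ht : 0 < t) => by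
    norm_num [upperHalfStrip, ht]
  simpa using map_mem_closure hpath (show (0 : ℝ) ∈ closure (Set.Ioi 0) by simp) hmaps

variable {s : ℂ} {x : ℝ}

lemma differentiableAt_hurwitzMoment (hs : s ≠ 1) (a : ℤ) (q : ℕ) [NeZero q] :
    DifferentiableAt ℂ (fun s => hurwitzMoment s a q) s := by
  unfold hurwitzMoment ZMod.LFunction
  have := Nat.cast_ne_zero (R := ℂ).2 (NeZero.ne q)
  refine .mul (by fun_prop (disch := simp [this])) (.fun_sum fun j _ => ?_)
  exact (HurwitzZeta.differentiableAt_hurwitzZeta _ hs).mul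
    (HurwitzZeta.differentiableAt_hurwitzZeta _ hs)

lemma ne_neg_natCast_of_im_ne_zero (hs : s.im ≠ 0) (m : ℕ) : s ≠ -m := by
  rintro rfl
  simp at hs

lemma differentiableAt_gammaFactor (hs : s.im ≠ 0) : DifferentiableAt ℂ gammaFactor s := by
  have hΓ {f : ℂ → ℂ} (hf : DifferentiableAt ℂ f s) (him : (f s).im ≠ 0) :
      DifferentiableAt ℂ (fun s => Complex.Gamma (f s)) s :=
    (Complex.differentiableAt_Gamma _ (ne_neg_natCast_of_im_ne_zero him)).fun_comp' s hf
  exact ((hΓ (f := fun s => 1 - s) (by fun_prop) (by simpa using hs)).mul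
    (hΓ (f := fun s => 2 * s - 1) (by fun_prop) (by simpa using hs))).div
    (hΓ differentiableAt_fun_id hs) (Complex.Gamma_ne_zero (ne_neg_natCast_of_im_ne_zero hs))

lemma differentiableAt_mainTerm (hx : 0 < x) (hs : s.im ≠ 0) :
    DifferentiableAt ℂ (fun s => mainTerm s x) s := by
  have hζ {f : ℂ → ℂ} (hf : DifferentiableAt ℂ f s) (him : (f s).im ≠ 0) :
      DifferentiableAt ℂ (fun s => riemannZeta (f s)) s :=
    (differentiableAt_riemannZeta fun h => him (by simp [h])).fun_comp' s hf
  exact (hζ (f := fun s => 2 * s) (by fun_prop) (by simpa using hs)).add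
    ((((differentiableAt_gammaFactor hs).const_mul 2).mul
      (.const_cpow (by fun_prop) (.inl (Complex.ofReal_ne_zero.2 hx.ne')))).mul
      (hζ (f := fun s => 2 * s - 1) (by fun_prop) (by simpa using hs)))

lemma hurwitzMoment_sub_hurwitzMoment_neg_of_mem_upperHalfStrip (hs : s ∈ upperHalfStrip)
    (a q : ℕ) [NeZero a] [NeZero q] :
    hurwitzMoment s a q - hurwitzMoment s (-q) a =
      ((a / q : ℝ) : ℂ) ^ (-s) * (mainTerm s (a / q) + errorSeries s (a / q)) +
        riemannZeta s ^ 2 := by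
  have hx : 0 < (a / q : ℝ) :=
    div_pos (Nat.cast_pos.2 (NeZero.pos a)) (Nat.cast_pos.2 (NeZero.pos q))
  have hne_one {z : ℂ} (hz : z ∈ upperHalfStrip) : z ≠ 1 := fun h => by
    simp [upperHalfStrip, h] at hz
  have hleft : DifferentiableOn ℂ (fun s => hurwitzMoment s a q - hurwitzMoment s (-q) a)
      upperHalfStrip := fun z hz =>
    ((differentiableAt_hurwitzMoment (hne_one hz) a q).sub
      (differentiableAt_hurwitzMoment (hne_one hz) (-q) a)).differentiableWithinAt
  have hright : DifferentiableOn ℂ (fun s => ((a / q : ℝ) : ℂ) ^ (-s) *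
      (mainTerm s (a / q) + errorSeries s (a / q)) + riemannZeta s ^ 2) upperHalfStrip := by
    refine .add (.mul ?_ (.add ?_ ?_)) ?_
    · exact .const_cpow (by fun_prop) (.inl (Complex.ofReal_ne_zero.2 hx.ne'))
    · exact fun z hz => (differentiableAt_mainTerm hx hz.2.2.ne').differentiableWithinAt
    · exact (differentiableOn_errorSeries (NeZero.pos a) (NeZero.pos q)).mono
        fun z hz => ⟨hz.1, hz.2.1⟩
    · exact fun z hz => ((differentiableAt_riemannZeta (hne_one hz)).pow 2).differentiableWithinAt
  refine (hleft.analyticOnNhd isOpen_upperHalfStrip).eqOn_of_preconnected_of_eventuallyEq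
    (hright.analyticOnNhd isOpen_upperHalfStrip) convex_upperHalfStrip.isPreconnected
    (z₀ := 3 / 2 + Complex.I) (by norm_num [upperHalfStrip]) ?_ hs
  have hconv : IsOpen {z : ℂ | 1 < z.re ∧ z.re < 2} :=
    (isOpen_lt continuous_const Complex.continuous_re).inter
      (isOpen_lt Complex.continuous_re continuous_const)
  filter_upwards [hconv.mem_nhds (by norm_num)] with z hz
  exact hurwitzMoment_sub_hurwitzMoment_neg hz.1 hz.2 a q

lemma ofReal_log_eight_mul_pi_mul (hx : 0 < x) :
    (Real.log (8 * π * x) : ℂ) = 2 * Complex.log 2 + Complex.log (2 * π) + Complex.log x := by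
  have hlog : Real.log (8 * π * x) = 2 * Real.log 2 + Real.log (2 * π) + Real.log x := by
    rw [← Real.log_rpow two_pos, ← Real.log_mul (by positivity) (by positivity),
      ← Real.log_mul (by positivity) hx.ne']
    norm_num
    ring_nf
  rw [hlog]
  push_cast
  rw [Complex.ofReal_log two_pos.le, Complex.ofReal_log (by positivity), Complex.ofReal_log hx.le]
  push_cast
  rfl

lemma hasDerivAt_mainTerm_numerator (hx : 0 < x) :
    HasDerivAt (fun s : ℂ => Complex.Gamma (1 - s) * Complex.Gamma (2 * s) / Complex.Gamma s *
      (x : ℂ) ^ (2 * s - 1) * riemannZeta (2 * s - 1)) (-Real.log (8 * π * x) : ℝ) (1 / 2) := by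
  set γ := Real.eulerMascheroniConstant
  have hdouble : HasDerivAt (fun s : ℂ => 2 * s) 2 (1 / 2) := by
    simpa using (hasDerivAt_id (1 / 2 : ℂ)).const_mul 2
  have hshift : HasDerivAt (fun s : ℂ => 2 * s - 1) 2 (1 / 2) := hdouble.sub_const 1
  have hΓ := Complex.hasDerivAt_Gamma_one_half
  have hΓ_reflect : HasDerivAt (fun s : ℂ => Complex.Gamma (1 - s))
      (-(-√π * (γ + 2 * Complex.log 2))) (1 / 2) :=
    HasDerivAt.comp_const_sub 1 _ (by norm_num; simpa using hΓ)
  have hΓ_double : HasDerivAt (fun s : ℂ => Complex.Gamma (2 * s)) (-γ * 2) (1 / 2) :=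
    HasDerivAt.comp (h₂ := Complex.Gamma) _ (by norm_num; exact Complex.hasDerivAt_Gamma_one)
      hdouble
  have hpow : HasDerivAt (fun s : ℂ => (x : ℂ) ^ (2 * s - 1)) _ (1 / 2) :=
    hshift.const_cpow (.inl (Complex.ofReal_ne_zero.2 hx.ne'))
  have hζ : HasDerivAt (fun s : ℂ => riemannZeta (2 * s - 1))
      (-Complex.log (2 * π) / 2 * 2) (1 / 2) := by
    refine HasDerivAt.comp (h₂ := riemannZeta) _ ?_ hshift
    rw [← deriv_riemannZeta_zero, show (2 * (1 / 2) - 1 : ℂ) = 0 by norm_num]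
    exact (differentiableAt_riemannZeta zero_ne_one).hasDerivAt
  have hΓ_half : Complex.Gamma (1 / 2) = √π := by
    rw [← Real.Gamma_one_half_eq, ← Complex.Gamma_ofReal]
    norm_num
  have hΓ_ne : Complex.Gamma (1 / 2) ≠ 0 := Complex.Gamma_ne_zero_of_re_pos (by norm_num)
  refine ((((hΓ_reflect.mul hΓ_double).div hΓ hΓ_ne).mul hpow).mul hζ).congr_deriv ?_
  have hpi : (√π : ℂ) ≠ 0 := hΓ_half ▸ hΓ_ne
  rw [Complex.ofReal_neg, ofReal_log_eight_mul_pi_mul hx]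
  simp only [Pi.mul_apply, Pi.div_apply]
  norm_num only [hΓ_half, riemannZeta_zero, Complex.Gamma_one, Complex.cpow_zero]
  field_simp
  ring

/-- The numerator takes the value `ζ(0) = -1/2` at `s = 1/2`, so its pole there is opposite to that
of `ζ(2s)`. -/
lemma tendsto_mainTerm (hx : 0 < x) :
    Tendsto (fun s => mainTerm s x) (𝓝[≠] (1 / 2))
      (𝓝 ((Real.eulerMascheroniConstant - Real.log (8 * π * x) : ℝ) : ℂ)) := by
  have hdouble : Tendsto (fun s : ℂ => 2 * s) (𝓝[≠] (1 / 2)) (𝓝[≠] 1) := by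
    refine tendsto_nhdsWithin_iff.2 ⟨?_, ?_⟩
    · have hcont : Continuous fun s : ℂ => 2 * s := by fun_prop
      simpa using (hcont.tendsto (1 / 2)).mono_left nhdsWithin_le_nhds
    · filter_upwards [self_mem_nhdsWithin] with s (hs : s ≠ 1 / 2) h
      exact hs (by linear_combination (Set.mem_singleton_iff.1 h) / 2)
  have hζ := tendsto_riemannZeta_sub_one_div.comp hdouble
  have hslope := hasDerivAt_iff_tendsto_slope.1 (hasDerivAt_mainTerm_numerator hx)
  rw [Complex.ofReal_sub, sub_eq_add_neg, ← Complex.ofReal_neg]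
  refine (hζ.add hslope).congr' ?_
  filter_upwards [self_mem_nhdsWithin] with s (hs : s ≠ 1 / 2)
  have hs' : 2 * s - 1 ≠ 0 := fun h => hs (by linear_combination h / 2)
  have : s - 1 / 2 ≠ 0 := sub_ne_zero.2 hs
  have hΓ : Complex.Gamma (2 * s) = (2 * s - 1) * Complex.Gamma (2 * s - 1) := by
    simpa using Complex.Gamma_add_one _ hs'
  have hΓ_half : Complex.Gamma (1 / 2) ≠ 0 := Complex.Gamma_ne_zero_of_re_pos (by norm_num)
  rw [Function.comp_apply, slope_def_field, mainTerm, gammaFactor, hΓ]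
  norm_num [riemannZeta_zero, hΓ_half]
  field_simp
  ring

lemma hurwitzMoment_one_half_sub_hurwitzMoment_neg (a q : ℕ) [NeZero a] [NeZero q] :
    hurwitzMoment (1 / 2) a q - hurwitzMoment (1 / 2) (-q) a =
      ((a / q : ℝ) : ℂ) ^ (-(1 / 2) : ℂ) *
        ((Real.eulerMascheroniConstant - Real.log (8 * π * (a / q)) : ℝ) +
          errorSeries (1 / 2) (a / q)) +
        riemannZeta (1 / 2) ^ 2 := by
  have hx : 0 < (a / q : ℝ) :=
    div_pos (Nat.cast_pos.2 (NeZero.pos a)) (Nat.cast_pos.2 (NeZero.pos q))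
  have hhalf : (1 / 2 : ℂ) ≠ 1 := by norm_num
  have : (𝓝[upperHalfStrip] (1 / 2 : ℂ)).NeBot :=
    mem_closure_iff_nhdsWithin_neBot.1 one_half_mem_closure_upperHalfStrip
  have hpunctured : 𝓝[upperHalfStrip] (1 / 2 : ℂ) ≤ 𝓝[≠] (1 / 2) :=
    nhdsWithin_mono _ fun z hz h => by norm_num [upperHalfStrip, Set.mem_singleton_iff.1 h] at hz
  have hlimit {f : ℂ → ℂ} (hf : DifferentiableAt ℂ f (1 / 2)) :
      Tendsto f (𝓝[upperHalfStrip] (1 / 2)) (𝓝 (f (1 / 2))) :=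
    hf.continuousAt.tendsto.mono_left nhdsWithin_le_nhds
  have hpow : DifferentiableAt ℂ (fun s : ℂ => ((a / q : ℝ) : ℂ) ^ (-s)) (1 / 2) :=
    .const_cpow (by fun_prop) (.inl (Complex.ofReal_ne_zero.2 hx.ne'))
  have hstrip : IsOpen {s : ℂ | 0 < s.re ∧ s.re < 2} :=
    (isOpen_lt continuous_const Complex.continuous_re).inter
      (isOpen_lt Complex.continuous_re continuous_const)
  have hseries := (differentiableOn_errorSeries (NeZero.pos a) (NeZero.pos q)).differentiableAt
    (hstrip.mem_nhds (show (1 / 2 : ℂ) ∈ _ by norm_num))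
  refine tendsto_nhds_unique ((hlimit (f := fun s => hurwitzMoment s a q)
      (differentiableAt_hurwitzMoment hhalf a q)).sub
    (hlimit (f := fun s => hurwitzMoment s (-q) a) (differentiableAt_hurwitzMoment hhalf (-q) a)))
    ((((hlimit hpow).mul (((tendsto_mainTerm hx).mono_left hpunctured).add
      (hlimit hseries))).add ((hlimit (differentiableAt_riemannZeta hhalf)).pow 2)).congr' ?_)
  filter_upwards [self_mem_nhdsWithin] with s hs
  exact (hurwitzMoment_sub_hurwitzMoment_neg_of_mem_upperHalfStrip hs a q).symm

end AnalyticContinuation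

section Conj

/-- The identity theorem: both sides are holomorphic off `s = 1` and agree where the Dirichlet
series converges. -/
lemma hurwitzZeta_conj (x : UnitAddCircle) {s : ℂ} (hs : s ≠ 1) :
    HurwitzZeta.hurwitzZeta x (conj s) = conj (HurwitzZeta.hurwitzZeta x s) := by
  obtain ⟨θ, ⟨hθ, hθ₁⟩, rfl⟩ : ∃ θ ∈ Set.Ioc (0 : ℝ) 1, (θ : UnitAddCircle) = x := by
    have hx : x ∈ ((↑) : ℝ → UnitAddCircle) '' Set.Ioc (0 : ℝ) (0 + 1) :=
      AddCircle.coe_image_Ioc_eq (1 : ℝ) 0 ▸ Set.mem_univ x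
    simpa using hx
  set f : ℂ → ℂ := HurwitzZeta.hurwitzZeta (θ : UnitAddCircle)
  have hf : ∀ z : ℂ, z ≠ 1 → DifferentiableAt ℂ f z := fun z hz =>
    HurwitzZeta.differentiableAt_hurwitzZeta _ hz
  have hf_analytic : AnalyticOnNhd ℂ f {1}ᶜ :=
    DifferentiableOn.analyticOnNhd (fun z hz => (hf z hz).differentiableWithinAt)
      isOpen_compl_singleton
  have hconj_analytic : AnalyticOnNhd ℂ (fun z => conj (f (conj z))) {1}ᶜ :=
    DifferentiableOn.analyticOnNhd
      (fun z hz => (differentiableAt_conj_conj_iff.2 <| hf _ <|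
        (map_ne_one_iff _ (starRingEnd ℂ).injective).2 hz).differentiableWithinAt)
      isOpen_compl_singleton
  have hseries (z : ℂ) (hz : 1 < z.re) : conj (f (conj z)) = f z := by
    have hz' : 1 < (conj z).re := by rwa [Complex.conj_re]
    simp only [f]
    rw [← (hasSum_hurwitzZeta hz' hθ hθ₁).tsum_eq, ← (hasSum_hurwitzZeta hz hθ hθ₁).tsum_eq,
      Complex.conj_tsum]
    refine tsum_congr fun j => ?_
    have harg : (((j + θ : ℝ) : ℂ)).arg ≠ π := by
      rw [Complex.arg_ofReal_of_nonneg (by positivity)]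
      exact Real.pi_ne_zero.symm
    rw [← map_neg, Complex.cpow_conj _ _ harg, Complex.conj_conj, Complex.conj_ofReal]
  have heq := hconj_analytic.eqOn_of_preconnected_of_eventuallyEq hf_analytic
    (isConnected_compl_singleton_of_one_lt_rank (by simp) 1).isPreconnected
    (by norm_num : (2 : ℂ) ∈ ({1}ᶜ : Set ℂ))
    (eventuallyEq_of_mem
      ((isOpen_lt continuous_const Complex.continuous_re).mem_nhds (by norm_num)) hseries)
  simpa using congrArg conj (heq hs)

lemma conj_one_half : conj (1 / 2 : ℂ) = 1 / 2 := by
  rw [map_div₀, map_one, map_ofNat]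

lemma conj_hurwitzZeta_one_half (x : UnitAddCircle) :
    conj (HurwitzZeta.hurwitzZeta x (1 / 2)) = HurwitzZeta.hurwitzZeta x (1 / 2) := by
  rw [← hurwitzZeta_conj x (by norm_num), conj_one_half]

lemma conj_riemannZeta_one_half : conj (riemannZeta (1 / 2)) = riemannZeta (1 / 2) := by
  rw [← riemannZeta_conj, conj_one_half]

lemma ofReal_cpow_neg_one_half {t : ℝ} (ht : 0 ≤ t) :
    (t : ℂ) ^ (-(1 / 2) : ℂ) = ((√t)⁻¹ : ℝ) := by
  rw [Real.sqrt_eq_rpow, ← Real.rpow_neg ht, Complex.ofReal_cpow ht]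
  norm_num

end Conj

section CharacterSums

lemma conj_char_apply {q : ℕ} (χ : DirichletCharacter ℂ q) {k : ZMod q} (hk : IsUnit k) :
    conj (χ k) = χ k⁻¹ := by
  obtain ⟨u, rfl⟩ := hk
  rw [ZMod.inv_coe_unit, ← Ring.inverse_unit, ← MulChar.inv_apply]
  exact MulChar.star_apply' χ u

variable {q : ℕ} [NeZero q]

lemma sum_char_mul_conj_char (b k : ZMod q) :
    ∑ χ : DirichletCharacter ℂ q, χ b * conj (χ k) =
      if IsUnit k ∧ k = b then (q.totient : ℂ) else 0 := by
  by_cases hk : IsUnit k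
  · simp only [hk, true_and, conj_char_apply _ hk]
    simpa only [mul_comm] using DirichletCharacter.sum_char_inv_mul_char_eq ℂ hk b
  · simp [hk, MulChar.map_nonunit]

lemma sum_norm_sq_sum_char_mul (f : ZMod q → ℂ) {a : ZMod q} (ha : IsUnit a) :
    ∑ χ : DirichletCharacter ℂ q, (‖∑ r, χ r * f r‖ ^ 2 : ℂ) * χ a =
      q.totient * ∑ r with IsUnit r, conj (f (a * r)) * f r := by
  have hexpand (χ : DirichletCharacter ℂ q) : (‖∑ r, χ r * f r‖ ^ 2 : ℂ) * χ a =
      ∑ r, ∑ k, f r * conj (f k) * (χ (a * r) * conj (χ k)) := by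
    rw [← Complex.mul_conj', map_sum, Finset.sum_mul_sum, Finset.sum_mul]
    refine Finset.sum_congr rfl fun r _ => ?_
    rw [Finset.sum_mul]
    refine Finset.sum_congr rfl fun k _ => ?_
    simp only [map_mul]
    ring
  have hcollapse (r : ZMod q) : ∑ k, ∑ χ : DirichletCharacter ℂ q,
      f r * conj (f k) * (χ (a * r) * conj (χ k)) =
        if IsUnit r then q.totient * (conj (f (a * r)) * f r) else 0 := by
    simp only [← Finset.mul_sum, sum_char_mul_conj_char]
    rw [Finset.sum_eq_single (a * r) (fun k _ hk => by simp [hk]) (by simp)]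
    simp [IsUnit.mul_iff, ha, mul_comm]
  simp only [hexpand]
  rw [Finset.sum_comm, Finset.mul_sum, Finset.sum_filter]
  exact Finset.sum_congr rfl fun r _ => by rw [Finset.sum_comm, hcollapse]

end CharacterSums

section SecondMoment

variable {q : ℕ} [NeZero q]

lemma LFunction_one_half (f : ZMod q → ℂ) :
    ZMod.LFunction f (1 / 2) =
      ((√q)⁻¹ : ℝ) * ∑ r, f r * HurwitzZeta.hurwitzZeta (ZMod.toAddCircle r) (1 / 2) := by
  rw [ZMod.LFunction, ← ofReal_cpow_neg_one_half (Nat.cast_nonneg q), Complex.ofReal_natCast]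

lemma conj_hurwitzMoment_one_half (a : ℤ) :
    conj (hurwitzMoment (1 / 2) a q) = hurwitzMoment (1 / 2) a q := by
  simp only [hurwitzMoment, LFunction_one_half, map_mul, map_sum, conj_hurwitzZeta_one_half,
    Complex.conj_ofReal]

lemma LFunction_one_one_half (hq : q.Prime) :
    (1 : DirichletCharacter ℂ q).LFunction (1 / 2) =
      (1 - ((√q)⁻¹ : ℝ)) * riemannZeta (1 / 2) := by
  have h := DirichletCharacter.LFunctionTrivChar_eq_mul_riemannZeta (N := q) (s := 1 / 2)
    (by norm_num)
  rw [hq.primeFactors, Finset.prod_singleton] at h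
  rw [← ofReal_cpow_neg_one_half (Nat.cast_nonneg q)]
  simpa [DirichletCharacter.LFunctionTrivChar] using h

lemma norm_sq_LFunction_one_one_half (hq : q.Prime) :
    (‖(1 : DirichletCharacter ℂ q).LFunction (1 / 2)‖ ^ 2 : ℂ) =
      ((1 - ((√q)⁻¹ : ℝ)) * riemannZeta (1 / 2)) ^ 2 := by
  rw [← Complex.mul_conj', LFunction_one_one_half hq, sq]
  simp only [map_mul, map_sub, map_one, Complex.conj_ofReal, conj_riemannZeta_one_half]

lemma sum_norm_sq_LFunction_one_half_mul (hq : q.Prime) {a : ℤ} (ha : (a : ZMod q) ≠ 0) :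
    ∑ χ : DirichletCharacter ℂ q, (‖χ.LFunction (1 / 2)‖ ^ 2 : ℂ) * χ (a : ZMod q) =
      q.totient * ((√q)⁻¹ : ℝ) *
        (hurwitzMoment (1 / 2) a q - ((√q)⁻¹ : ℝ) * riemannZeta (1 / 2) ^ 2) := by
  have : Fact q.Prime := ⟨hq⟩
  have hunits : (univ.filter fun r : ZMod q => IsUnit r) = univ.erase 0 := by
    ext r
    simp [isUnit_iff_ne_zero]
  have hterm (χ : DirichletCharacter ℂ q) :
      (‖χ.LFunction (1 / 2)‖ ^ 2 : ℂ) * χ (a : ZMod q) = (((√q)⁻¹ : ℝ) : ℂ) ^ 2 *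
        ((‖∑ r, χ r * HurwitzZeta.hurwitzZeta (ZMod.toAddCircle r) (1 / 2)‖ ^ 2 : ℂ) *
          χ (a : ZMod q)) := by
    rw [DirichletCharacter.LFunction, LFunction_one_half, norm_mul, Complex.norm_real,
      Real.norm_of_nonneg (by positivity)]
    push_cast
    ring
  simp only [hterm]
  rw [← Finset.mul_sum, sum_norm_sq_sum_char_mul _ ha.isUnit, hunits,
    Finset.sum_erase_eq_sub (Finset.mem_univ _), hurwitzMoment, LFunction_one_half]
  simp only [conj_hurwitzZeta_one_half, mul_zero, map_zero, HurwitzZeta.hurwitzZeta_zero,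
    conj_riemannZeta_one_half]
  ring

open scoped Classical in
lemma sum_ne_one_norm_sq_LFunction_one_half_mul (hq : q.Prime) {a : ℤ} (ha : (a : ZMod q) ≠ 0) :
    ∑ χ : DirichletCharacter ℂ q,
        (if χ = 1 then 0 else (‖χ.LFunction (1 / 2)‖ ^ 2 : ℂ) * χ (a : ZMod q)) =
      q.totient * ((√q)⁻¹ : ℝ) *
        (hurwitzMoment (1 / 2) a q - ((√q)⁻¹ : ℝ) * riemannZeta (1 / 2) ^ 2) -
        ((1 - ((√q)⁻¹ : ℝ)) * riemannZeta (1 / 2)) ^ 2 := by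
  have : Fact q.Prime := ⟨hq⟩
  rw [← sum_norm_sq_LFunction_one_half_mul hq ha, ← norm_sq_LFunction_one_one_half hq,
    ← Finset.add_sum_erase univ (fun χ : DirichletCharacter ℂ q =>
      (‖χ.LFunction (1 / 2)‖ ^ 2 : ℂ) * χ (a : ZMod q)) (Finset.mem_univ 1),
    MulChar.one_apply ha.isUnit, mul_one, add_sub_cancel_left,
    Finset.sum_ite, Finset.sum_const_zero, zero_add, Finset.filter_ne']

lemma Mtw_eq_hurwitzMoment_sub (hq : q.Prime) {a : ℤ} (ha : (a : ZMod q) ≠ 0) :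
    Mtw a q = hurwitzMoment (1 / 2) a q - riemannZeta (1 / 2) ^ 2 *
      ((2 * (√q / (q.totient : ℝ)) * (1 - 1 / √q) : ℝ) : ℂ) := by
  have hq₁ : (1 : ℝ) < q := by exact_mod_cast hq.one_lt
  have htotient : (q.totient : ℂ) = (√q : ℂ) ^ 2 - 1 := by
    rw [← Complex.ofReal_pow, Real.sq_sqrt (Nat.cast_nonneg q), Nat.totient_prime hq,
      Nat.cast_sub hq.one_lt.le]
    simp
  have htotient₀ : (√q : ℂ) ^ 2 - 1 ≠ 0 := by
    rw [← htotient]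
    exact_mod_cast (Nat.totient_pos.2 hq.pos).ne'
  have hsqrt₀ : (√q : ℂ) ≠ 0 := by
    exact_mod_cast (Real.sqrt_pos.2 (zero_lt_one.trans hq₁)).ne'
  rw [Mtw, sum_ne_one_norm_sq_LFunction_one_half_mul hq ha]
  push_cast
  rw [htotient]
  field_simp
  ring

end SecondMoment

section ReciprocityError

/-- The error term `𝓔(x) = x^{-1/2} W(x)` of the reciprocity law, where `W(x)` is `errorSeries` at
`s = 1/2`. The convention `0⁻¹ = 0` gives `𝓔(0) = 0`, its limit from the right. -/
noncomputable def reciprocityError (x : ℝ) : ℝ := (√x)⁻¹ * (errorSeries (1 / 2) x).re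

lemma exists_abs_reciprocityError_le :
    ∃ C > 0, ∀ x ∈ Set.Ici (0 : ℝ), |reciprocityError x| ≤ C * x := by
  obtain ⟨C, hC, hbound⟩ := exists_norm_errorSeries_le (s := 1 / 2) (by norm_num) (by norm_num)
  refine ⟨C, hC, fun x hx => ?_⟩
  obtain rfl | hx := (Set.mem_Ici.1 hx).eq_or_lt
  · simp [reciprocityError]
  have hexponent : (1 / 2 : ℂ).re + 1 = 1 / 2 + 1 := by norm_num
  have hnorm := (Complex.abs_re_le_norm _).trans (hbound x hx)
  rw [hexponent, Real.rpow_add_one hx.ne', ← Real.sqrt_eq_rpow] at hnorm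
  rw [reciprocityError, abs_mul, abs_of_pos (inv_pos.2 (Real.sqrt_pos.2 hx)),
    inv_mul_le_iff₀ (Real.sqrt_pos.2 hx)]
  linarith

lemma continuousOn_reciprocityError : ContinuousOn reciprocityError (Set.Ici 0) := by
  obtain ⟨C, -, hbound⟩ := exists_abs_reciprocityError_le
  have hpos : ContinuousOn reciprocityError (Set.Ioi 0) :=
    (Real.continuous_sqrt.continuousOn.inv₀ fun x hx => (Real.sqrt_pos.2 hx).ne').mul
      (Complex.continuous_re.comp_continuousOn
        (continuousOn_errorSeries (by norm_num) (by norm_num)))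
  intro x hx
  obtain rfl | hx := (Set.mem_Ici.1 hx).eq_or_lt
  · have hzero : reciprocityError 0 = 0 := by simp [reciprocityError]
    have hlimit : Tendsto (fun x : ℝ => C * x) (𝓝[≥] 0) (𝓝 0) := by
      simpa using (continuous_const_mul C).tendsto 0 |>.mono_left nhdsWithin_le_nhds
    rw [ContinuousWithinAt, hzero]
    exact squeeze_zero_norm' (eventually_mem_nhdsWithin.mono hbound) hlimit
  · exact (hpos.continuousAt (Ioi_mem_nhds hx)).continuousWithinAt

lemma hurwitzMoment_one_half_reciprocity (a q : ℕ) [NeZero a] [NeZero q] :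
    hurwitzMoment (1 / 2) a q - hurwitzMoment (1 / 2) (-q) a =
      (√(q / a) * (Real.log (q / a) + Real.eulerMascheroniConstant - Real.log (8 * π)) : ℝ) +
        ((√(a / q))⁻¹ : ℝ) * errorSeries (1 / 2) (a / q) + riemannZeta (1 / 2) ^ 2 := by
  have hx : 0 < (a / q : ℝ) :=
    div_pos (Nat.cast_pos.2 (NeZero.pos a)) (Nat.cast_pos.2 (NeZero.pos q))
  have hlog : Real.log (q / a) = -Real.log (a / q) := by rw [← Real.log_inv, inv_div]
  have hsqrt : √(q / a : ℝ) = (√(a / q))⁻¹ := by rw [← Real.sqrt_inv, inv_div]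
  rw [hurwitzMoment_one_half_sub_hurwitzMoment_neg, ofReal_cpow_neg_one_half hx.le,
    Real.log_mul (by positivity) hx.ne', hlog, hsqrt]
  push_cast
  ring

/-- The right side is real because every other term of the reciprocity law for Hurwitz moments is.
-/
lemma ofReal_reciprocityError (a q : ℕ) [NeZero a] [NeZero q] :
    (reciprocityError (a / q) : ℂ) = ((√(a / q))⁻¹ : ℝ) * errorSeries (1 / 2) (a / q) := by
  have hreal : conj (((√(a / q))⁻¹ : ℝ) * errorSeries (1 / 2) (a / q)) =
      ((√(a / q))⁻¹ : ℝ) * errorSeries (1 / 2) (a / q) := by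
    rw [show ((√(a / q))⁻¹ : ℝ) * errorSeries (1 / 2) (a / q) = _ from
      eq_sub_of_add_eq' (eq_sub_of_add_eq
        (hurwitzMoment_one_half_reciprocity a q).symm)]
    simp only [map_sub, map_pow, conj_hurwitzMoment_one_half, conj_riemannZeta_one_half,
      Complex.conj_ofReal]
  rw [← Complex.conj_eq_iff_re.1 hreal, Complex.re_ofReal_mul, reciprocityError]

lemma Mtw_sub_Mtw_neg {a q : ℕ} [NeZero a] [NeZero q] (ha : a.Prime) (hq : q.Prime) (h : a ≠ q) :
    Mtw a q - Mtw (-q) a =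
      (√(q / a) * (Real.log (q / a) + Real.eulerMascheroniConstant - Real.log (8 * π)) : ℝ) +
        riemannZeta (1 / 2) ^ 2 *
          (1 - 2 * (√q / (q.totient : ℝ)) * (1 - 1 / √q) +
            2 * (√a / (a.totient : ℝ)) * (1 - 1 / √a) : ℝ) +
        reciprocityError (a / q) := by
  have haq : ((a : ℤ) : ZMod q) ≠ 0 := by
    rwa [Int.cast_natCast, Ne, ZMod.natCast_eq_zero_iff, Nat.prime_dvd_prime_iff_eq hq ha, eq_comm]
  have hqa : ((-q : ℤ) : ZMod a) ≠ 0 := by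
    rwa [Int.cast_neg, neg_ne_zero, Int.cast_natCast, Ne, ZMod.natCast_eq_zero_iff,
      Nat.prime_dvd_prime_iff_eq ha hq]
  rw [Mtw_eq_hurwitzMoment_sub hq haq, Mtw_eq_hurwitzMoment_sub ha hqa, ofReal_reciprocityError]
  have hreciprocity := hurwitzMoment_one_half_reciprocity a q
  push_cast at hreciprocity ⊢
  linear_combination hreciprocity

end ReciprocityError

end ConreyYoung

open ConreyYoung in
theorem reciprocity_error_continuous_general :
    ∃ (E : ℝ → ℝ) (C : ℝ), ContinuousOn E (Set.Ici 0) ∧ 0 < C ∧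
      (∀ x ∈ Set.Ici (0 : ℝ), |E x| ≤ C * x) ∧
      ∀ (a q : ℕ) (ha : a.Prime) (hq : q.Prime), a ≠ q →
        haveI : NeZero q := ⟨hq.ne_zero⟩
        haveI : NeZero a := ⟨ha.ne_zero⟩
        Mtw (a : ℤ) q - Mtw (-(q : ℤ)) a =
          (√((q : ℝ) / a) *
              (Real.log ((q : ℝ) / a) + Real.eulerMascheroniConstant - Real.log (8 * π)) : ℝ)
          + (riemannZeta (1 / 2)) ^ 2 *
            ((1 - 2 * (√q / (Nat.totient q : ℝ)) * (1 - 1 / √q)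
                + 2 * (√a / (Nat.totient a : ℝ)) * (1 - 1 / √a) : ℝ))
          + (E ((a : ℝ) / q) : ℂ) := by
  obtain ⟨C, hC, hbound⟩ := exists_abs_reciprocityError_le
  refine ⟨reciprocityError, C, continuousOn_reciprocityError, hC, hbound, fun a q ha hq h => ?_⟩
  have : NeZero q := ⟨hq.ne_zero⟩
  have : NeZero a := ⟨ha.ne_zero⟩
  exact Mtw_sub_Mtw_neg ha hq h

/-- The reciprocity law of Conrey and Young: the error term extends to a continuous
function on `[0,∞)` which is `O(x)` on `[0,1]`. -/
theorem reciprocity_error_continuous :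
    ∃ (E : ℝ → ℝ) (C : ℝ), ContinuousOn E (Set.Ici 0) ∧ 0 < C ∧
      (∀ x ∈ Set.Icc (0:ℝ) 1, |E x| ≤ C * x) ∧
      ∀ (a q : ℕ) (ha : a.Prime) (hq : q.Prime), a ≠ q →
        haveI : NeZero q := ⟨hq.ne_zero⟩
        haveI : NeZero a := ⟨ha.ne_zero⟩
        Mtw (a : ℤ) q - Mtw (-(q : ℤ)) a =
          (Real.sqrt ((q : ℝ) / a) *
              (Real.log ((q : ℝ) / a) + Real.eulerMascheroniConstant - Real.log (8 * π)) : ℝ)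
          + (riemannZeta (1/2))^2 *
            ((1 - 2 * (Real.sqrt q / (Nat.totient q : ℝ)) * (1 - 1 / Real.sqrt q)
                + 2 * (Real.sqrt a / (Nat.totient a : ℝ)) * (1 - 1 / Real.sqrt a) : ℝ))
          + (E ((a : ℝ) / q) : ℂ) := by
  obtain ⟨E, C, hE, hC, hbound, hformula⟩ := reciprocity_error_continuous_general
  exact ⟨E, C, hE, hC, fun x hx => hbound x hx.1, hformula⟩
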